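/- arXiv:2103.08858 — 5 statements merged into one kernel-verified Lean document; each statement's English description precedes it below -/
import Mathlib

section
/- For any finite field 𝔽_q of odd characteristic, any integer n ≥ 1, any multiplicative characters A₁,…,Aₙ₊₁, B₂,…,Bₙ₊₁ of 𝔽_q^×, and any λ ∈ 𝔽_q, the period function satisfies ₙ₊₁ℙₙ(A₁,…,Aₙ₊₁; B₂,…,Bₙ₊₁; λ; q) = ((−1)^{n+1}/(q−1)) · (∏_{i=2}^{n+1} (AᵢBᵢ)(−1)) · ∑_{χ} binom(A₁χ, χ) · binom(A₂χ, B₂χ) ⋯ binom(Aₙ₊₁χ, Bₙ₊₁χ) · χ(λ) + δ(λ) · ∏_{i=2}^{n+1} J(Aᵢ, ĀᵢBᵢ), where the sum runs over all multiplicative characters χ of 𝔽_q^×. -/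
/-- Auxiliary to `periodP`: peels off the *first* pair of the list. -/
noncomputable def periodPAux {F : Type*} [Field F] [Fintype F]
    (A₁ : MulChar F ℂ) : List (MulChar F ℂ × MulChar F ℂ) → F → ℂ
  | [], lam => A₁⁻¹ (1 - lam)
  | p :: rest, lam => ∑ x : F, p.1 x * (p.1⁻¹ * p.2) (1 - x) * periodPAux A₁ rest (lam * x)

/-- `periodP A₁ [(A₂,B₂),…,(Aₙ₊₁,Bₙ₊₁)] λ` is the finite-field period function
`ₙ₊₁ℙₙ(A₁,…,Aₙ₊₁; B₂,…,Bₙ₊₁; λ; q)`: it is defined inductively by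
`₁ℙ₀(A₁;λ) = A₁⁻¹(1-λ)` and
`ₙ₊₁ℙₙ(A₁,…,Aₙ₊₁;B₂,…,Bₙ₊₁;λ) = ∑ₓ Aₙ₊₁(x)·(Aₙ₊₁⁻¹Bₙ₊₁)(1-x)·ₙℙₙ₋₁(A₁,…,Aₙ;B₂,…,Bₙ;λx)`,
the sum being over `x ∈ 𝔽_q`.  (Multiplicative characters are extended by `A(0)=0`,
which is automatic for `MulChar`.) -/
noncomputable def periodP {F : Type*} [Field F] [Fintype F]
    (A₁ : MulChar F ℂ) (l : List (MulChar F ℂ × MulChar F ℂ)) (lam : F) : ℂ :=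
  periodPAux A₁ l.reverse lam

/-- The complex-valued quadratic character `φ` of a finite field. -/
noncomputable def quadChar (F : Type*) [Field F] [Fintype F] [DecidableEq F] : MulChar F ℂ :=
  (quadraticChar F).ringHomComp (Int.castRingHom ℂ)

/-- The finite-field binomial coefficient `binom(A,B) = -B(-1)·J(A,B̄)`. -/
noncomputable def binomC {F : Type*} [Field F] [Fintype F] (A B : MulChar F ℂ) : ℂ :=
  -(B (-1)) * jacobiSum A B⁻¹

/-!
The Euler transform `f ↦ (λ ↦ ∑ₓ A(x) C(1 - x) f(λx))` is a linear operator for which every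
multiplicative character `χ` is an eigenvector, with eigenvalue `J(Aχ, C)`, and so is the indicator
`δ` of `0`, with eigenvalue `J(A, C)`. By definition `ₙ₊₁ℙₙ` arises from the function `Ā₁(1 - λ)`
by applying `n` Euler transforms with `C = ĀᵢBᵢ`, so it suffices to expand `Ā₁(1 - λ)` in these
eigenvectors. Off `0` this is Mellin inversion on `𝔽_q^×`, whose coefficients are the binomial
coefficients `binom(A₁χ, χ)`. The reflection formula `J(A, B) = A(-1) J(A, (AB)⁻¹)` of Jacobi sums
then turns the eigenvalues `J(Aᵢχ, ĀᵢBᵢ)` into binomial coefficients.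
-/

section MellinInversion

variable {M R : Type*} [CommMonoid M] [CommRing R] [IsDomain R]
  [HasEnoughRootsOfUnity R (Monoid.exponent Mˣ)] [Fintype (MulChar M R)]

theorem sum_mulChar_apply [Finite M] [DecidableEq M] (a : M) :
    ∑ χ : MulChar M R, χ a = if a = 1 then (Nat.card Mˣ : R) else 0 := by
  split_ifs with ha
  · simp only [ha, map_one, Finset.sum_const, Finset.card_univ, nsmul_eq_mul, mul_one,
      ← MulChar.card_eq_card_units_of_hasEnoughRootsOfUnity M R, Nat.card_eq_fintype_card]
  · obtain ⟨ψ, hψ⟩ := MulChar.exists_apply_ne_one_of_hasEnoughRootsOfUnity M R ha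
    refine eq_zero_of_mul_eq_self_left hψ ?_
    simp only [Finset.mul_sum, ← MulChar.mul_apply]
    exact Fintype.sum_equiv (Equiv.mulLeft ψ) _ _ fun χ ↦ rfl

theorem mulChar_mellin_inversion [Fintype M] (f : M → R) (a : Mˣ) :
    ∑ χ : MulChar M R, (∑ x, f x * χ x) * χ a = Nat.card Mˣ * f ↑a⁻¹ := by
  classical
  calc ∑ χ : MulChar M R, (∑ x, f x * χ x) * χ a
      = ∑ x, f x * ∑ χ : MulChar M R, χ (x * a) := by
        simp only [Finset.sum_mul, Finset.mul_sum, map_mul, mul_assoc]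
        exact Finset.sum_comm
    _ = ∑ x, f x * if x = ↑a⁻¹ then (Nat.card Mˣ : R) else 0 := by
        simp only [sum_mulChar_apply, Units.mul_eq_one_iff_eq_inv]
    _ = Nat.card Mˣ * f ↑a⁻¹ := by simp [mul_comm]

end MellinInversion

theorem mulChar_apply_neg_one_mul_self {M R : Type*} [CommMonoid M] [HasDistribNeg M]
    [CommMonoidWithZero R] (χ : MulChar M R) : χ (-1) * χ (-1) = 1 := by
  simp [← map_mul]

section EulerTransform

variable {S R : Type*} [CommRing S] [Fintype S] [CommRing R]

/-- The finite-ring analogue of Euler's integral transform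
`f ↦ (t ↦ ∫₀¹ xᵃ (1 - x)ᶜ f(tx) dx)`, which raises the order of a hypergeometric function by one;
the characters `A` and `C` play the role of the exponents `a` and `c`. -/
def eulerTransform (A C : MulChar S R) : (S → R) →ₗ[R] (S → R) where
  toFun f t := ∑ x, A x * C (1 - x) * f (t * x)
  map_add' f g := by ext t; simp [mul_add, Finset.sum_add_distrib]
  map_smul' c f := by ext t; simp [Finset.mul_sum, mul_left_comm]

theorem eulerTransform_apply (A C : MulChar S R) (f : S → R) (t : S) :
    eulerTransform A C f t = ∑ x, A x * C (1 - x) * f (t * x) := rfl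

theorem eulerTransform_mulChar (A C χ : MulChar S R) :
    eulerTransform A C χ = jacobiSum (A * χ) C • ⇑χ := by
  ext t
  simp only [eulerTransform_apply, Pi.smul_apply, smul_eq_mul, jacobiSum, Finset.sum_mul]
  refine Finset.sum_congr rfl fun x _ ↦ ?_
  rw [map_mul, MulChar.mul_apply]
  ring

end EulerTransform

section FiniteField

variable {F R : Type*} [Field F] [Fintype F] [CommRing R]

theorem eulerTransform_single_zero [DecidableEq F] (A C : MulChar F R) :
    eulerTransform A C (Pi.single 0 1) = jacobiSum A C • Pi.single 0 1 := by
  ext t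
  rcases eq_or_ne t 0 with rfl | ht
  · simp [eulerTransform_apply, jacobiSum]
  · simp [eulerTransform_apply, Pi.single_apply, ht, MulChar.map_zero]

theorem jacobiSum_eq_apply_neg_one_mul_jacobiSum (A B : MulChar F R) :
    jacobiSum A B = A (-1) * jacobiSum A (A * B)⁻¹ := by
  rw [jacobiSum_comm A B, jacobiSum_comm A, jacobiSum, ← Equiv.sum_comp (Equiv.inv F), jacobiSum,
    Finset.mul_sum]
  refine Finset.sum_congr rfl fun x _ ↦ ?_
  rcases eq_or_ne x 0 with rfl | hx
  · simp [MulChar.map_zero]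
  have hsub : 1 - x⁻¹ = -1 * x⁻¹ * (1 - x) := by field_simp; ring
  simp only [Equiv.inv_apply, hsub, map_mul, MulChar.inv_apply', MulChar.mul_apply]
  ring

end FiniteField

section PeriodFunction

variable {F : Type*} [Field F] [Fintype F]

theorem binomC_eq_neg_mul_jacobiSum (A B : MulChar F ℂ) :
    binomC A B = -(A * B) (-1) * jacobiSum A (A⁻¹ * B) := by
  rw [binomC, jacobiSum_eq_apply_neg_one_mul_jacobiSum A B⁻¹, mul_inv, inv_inv, MulChar.mul_apply]
  ring

theorem binomC_mul_mul (A B χ : MulChar F ℂ) :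
    binomC (A * χ) (B * χ) = -(A * B) (-1) * jacobiSum (A * χ) (A⁻¹ * B) := by
  have hchar : (A * χ)⁻¹ * (B * χ) = A⁻¹ * B := by
    rw [mul_inv, mul_mul_mul_comm, inv_mul_cancel, mul_one]
  have hsign : (A * χ * (B * χ)) (-1) = (A * B) (-1) := by
    rw [mul_mul_mul_comm, MulChar.mul_apply, MulChar.mul_apply χ,
      mulChar_apply_neg_one_mul_self, mul_one]
  rw [binomC_eq_neg_mul_jacobiSum, hchar, hsign]

theorem jacobiSum_mul_inv_mul (A B χ : MulChar F ℂ) :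
    jacobiSum (A * χ) (A⁻¹ * B) = -(A * B) (-1) * binomC (A * χ) (B * χ) := by
  rw [binomC_mul_mul, ← mul_assoc, neg_mul_neg, mulChar_apply_neg_one_mul_self,
    one_mul]

theorem periodPAux_cons (A : MulChar F ℂ) (p : MulChar F ℂ × MulChar F ℂ)
    (l : List (MulChar F ℂ × MulChar F ℂ)) :
    periodPAux A (p :: l) = eulerTransform p.1 (p.1⁻¹ * p.2) (periodPAux A l) := rfl

variable [Fintype (MulChar F ℂ)]

theorem sum_binomC_mul_apply (A : MulChar F ℂ) (a : Fˣ) :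
    ∑ χ : MulChar F ℂ, binomC (A * χ) χ * χ a = -Nat.card Fˣ * A⁻¹ (1 - a) := by
  have hbinom (χ : MulChar F ℂ) :
      binomC (A * χ) χ = -A (-1) * ∑ x, A x * A⁻¹ (1 - x) * χ x := by
    simpa [jacobiSum, mul_right_comm] using binomC_mul_mul A 1 χ
  have hval : A (-1) * (A ↑a⁻¹ * A⁻¹ (1 - ↑a⁻¹)) = A⁻¹ (1 - a) := by
    have hsub : 1 - (a : F) = -1 * a * (1 - ↑a⁻¹) := by
      rw [Units.val_inv_eq_inv_val, mul_one_sub, mul_assoc, mul_inv_cancel₀ a.ne_zero]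
      ring
    simp only [hsub, MulChar.inv_apply', map_mul, inv_neg_one, Units.val_inv_eq_inv_val]
    ring
  simp only [hbinom, mul_assoc (-A (-1)), ← Finset.mul_sum]
  rw [mulChar_mellin_inversion (fun x ↦ A x * A⁻¹ (1 - x)), ← hval]
  ring

theorem inv_one_sub_eq_sum_binomC [DecidableEq F] (A : MulChar F ℂ) :
    (fun t ↦ A⁻¹ (1 - t)) =
      (Nat.card Fˣ : ℂ)⁻¹ • ∑ χ : MulChar F ℂ, -binomC (A * χ) χ • ⇑χ + Pi.single 0 1 := by
  ext t
  rcases eq_or_ne t 0 with rfl | ht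
  · simp [MulChar.map_zero]
  have hsum := sum_binomC_mul_apply A (Units.mk0 t ht)
  have hcard : (Nat.card Fˣ : ℂ) ≠ 0 := Nat.cast_ne_zero.mpr Nat.card_pos.ne'
  rw [Units.val_mk0] at hsum
  simp only [Pi.add_apply, Pi.smul_apply, Finset.sum_apply, smul_eq_mul, neg_mul,
    Finset.sum_neg_distrib, hsum, neg_neg, inv_mul_cancel_left₀ hcard, Pi.single_eq_of_ne ht,
    add_zero]

theorem periodPAux_eq_sum_jacobiSum [DecidableEq F] (A : MulChar F ℂ)
    (l : List (MulChar F ℂ × MulChar F ℂ)) :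
    periodPAux A l =
      (Nat.card Fˣ : ℂ)⁻¹ • ∑ χ : MulChar F ℂ, (-binomC (A * χ) χ *
          (l.map fun p ↦ jacobiSum (p.1 * χ) (p.1⁻¹ * p.2)).prod) • ⇑χ
        + (l.map fun p ↦ jacobiSum p.1 (p.1⁻¹ * p.2)).prod • Pi.single 0 1 := by
  induction l with
  | nil => simpa [periodPAux] using inv_one_sub_eq_sum_binomC A
  | cons p l ih =>
    simp only [periodPAux_cons, ih, map_add, map_smul, map_sum, eulerTransform_mulChar,
      eulerTransform_single_zero, smul_smul, List.map_cons, List.prod_cons]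
    simp only [mul_comm, mul_left_comm]

end PeriodFunction

theorem statement0_general {F : Type*} [Field F] [Fintype F] [DecidableEq F]
    [Fintype (MulChar F ℂ)] {n : ℕ}
    (A : Fin (n + 1) → MulChar F ℂ) (B : Fin n → MulChar F ℂ) (lam : F) :
    periodP (A 0) (List.ofFn fun i : Fin n => (A i.succ, B i)) lam
      = ((-1) ^ (n + 1) / ((Fintype.card F : ℂ) - 1))
          * (∏ i : Fin n, (A i.succ * B i) (-1))
          * (∑ χ : MulChar F ℂ,
              binomC (A 0 * χ) χ * (∏ i : Fin n, binomC (A i.succ * χ) (B i * χ)) * χ lam)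
        + (if lam = 0 then (1 : ℂ) else 0)
            * ∏ i : Fin n, jacobiSum (A i.succ) ((A i.succ)⁻¹ * B i) := by
  have hprod (χ : MulChar F ℂ) :
      ∏ i, jacobiSum (A i.succ * χ) ((A i.succ)⁻¹ * B i) =
        (-1) ^ n * (∏ i, (A i.succ * B i) (-1)) * ∏ i, binomC (A i.succ * χ) (B i * χ) := by
    simp only [jacobiSum_mul_inv_mul, Finset.prod_mul_distrib, Finset.prod_neg,
      Finset.card_univ, Fintype.card_fin]
  have hcard : (Nat.card Fˣ : ℂ) = Fintype.card F - 1 := by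
    rw [Nat.card_units, Nat.card_eq_fintype_card, Nat.cast_pred Fintype.card_pos]
  simp only [periodP, periodPAux_eq_sum_jacobiSum, hcard, List.map_reverse, List.prod_reverse,
    List.map_ofFn, List.prod_ofFn, Function.comp_apply, hprod, Pi.add_apply, Pi.smul_apply,
    Finset.sum_apply, smul_eq_mul, Pi.single_apply, Finset.mul_sum]
  congr 1
  · refine Finset.sum_congr rfl fun χ _ ↦ ?_
    ring
  · exact mul_comm _ _

/-- Expansion of the period function `ₙ₊₁ℙₙ` as a character sum over all multiplicative
characters `χ` of `𝔽_q^×`: here `A 0, A 1, …, A n` are `A₁,…,Aₙ₊₁` and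
`B 0,…,B (n-1)` are `B₂,…,Bₙ₊₁`, and `δ(λ)` is encoded by the `if`. -/
theorem statement0 {F : Type*} [Field F] [Fintype F] [DecidableEq F]
    [Fintype (MulChar F ℂ)]
    (hodd : ringChar F ≠ 2) (n : ℕ) (hn : 1 ≤ n)
    (A : Fin (n + 1) → MulChar F ℂ) (B : Fin n → MulChar F ℂ) (lam : F) :
    periodP (A 0) (List.ofFn fun i : Fin n => (A i.succ, B i)) lam
      = ((-1) ^ (n + 1) / ((Fintype.card F : ℂ) - 1))
          * (∏ i : Fin n, (A i.succ * B i) (-1))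
          * (∑ χ : MulChar F ℂ,
              binomC (A 0 * χ) χ * (∏ i : Fin n, binomC (A i.succ * χ) (B i * χ)) * χ lam)
        + (if lam = 0 then (1 : ℂ) else 0)
            * ∏ i : Fin n, jacobiSum (A i.succ) ((A i.succ)⁻¹ * B i) := by
  exact statement0_general A B lam
end

section
/- Let 𝔽_q be a finite field of odd characteristic and let η, K, S be multiplicative characters of 𝔽_q^× such that none of η, Kφ, ηK, ηK̄ is trivial and ηK = S². Then for every t ∈ 𝔽_q with t ≠ 0 and t ≠ 1, one has ₃ℙ₂(φ, η, η̄; K, K̄; t; q) = φ(1−t)·( ₂ℙ₁(φKS̄, S; K; t; q) · ₂ℙ₁(φK̄S, S̄; K̄; t; q) − q ). -/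
/-! Substitutions turn `₃ℙ₂` into a sum over `B` of the character sums
`∑ᵤ S(u²) φ(B(1 - u)² - t(1 - Bu)²)`. After Euler's transformation of both factors, the product of
the two `₂ℙ₁` becomes a sum over `B`, the quotient of the two summation variables, of
`∑_z S(R(z)) φ((1 - tz)(1 - tBz))` with `R` a rational function of degree two.

For fixed `B` the two inner sums are compared by collecting the terms in which `S` has the same
argument `A`. If `A` is not a square, then `z ↦ 1/(tBz)` preserves `R` and changes the sign of the
`φ`-factor, so the fibre of `R` over `A` cancels. If `A = u²`, then the `φ`-factor is constant on
the fibre, whose size is governed by the discriminant of the equation `R(z) = u²`; this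
discriminant is the product of the values of the quadratic form at `u` and `-u`. The fibre over
`A = B⁻¹` is degenerate and contributes an extra term that vanishes after summation over `B`; for
`B = 1` the function `R` is constant, and the discrepancy is the term `-q`. -/

section Characters

instance {R R' : Type*} [CommMonoidWithZero R] [Nontrivial R] [CommMonoidWithZero R'] :
    MonoidWithZeroHomClass (MulChar R R') R R' where
  map_mul χ := map_mul χ
  map_one χ := map_one χ
  map_zero χ := χ.map_zero

lemma sum_mul_comp_eq_sum_mul_sum_fiber {α β R : Type*} [Fintype α] [Fintype β] [DecidableEq β]
    [CommSemiring R] (f : β → R) (g : α → β) (h : α → R) :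
    ∑ x, f (g x) * h x = ∑ b, f b * ∑ x with g x = b, h x := by
  rw [← Finset.sum_fiberwise Finset.univ g]
  refine Finset.sum_congr rfl fun b _ => ?_
  rw [Finset.mul_sum]
  refine Finset.sum_congr rfl fun x hx => ?_
  rw [(Finset.mem_filter.mp hx).2]

lemma sum_mulChar_mul_one_one_sub {F : Type*} [Field F] [Fintype F] {χ : MulChar F ℂ}
    (hχ : χ ≠ 1) :
    ∑ u : F, χ u * (1 : MulChar F ℂ) (1 - u) = -1 := by
  rw [← jacobiSum_one_nontrivial hχ, jacobiSum_comm, jacobiSum]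

variable {F : Type*} [Field F] [Fintype F] [DecidableEq F]

lemma quadChar_isQuadratic : (quadChar F).IsQuadratic :=
  (quadraticChar_isQuadratic F).comp _

lemma quadChar_inv : (quadChar F)⁻¹ = quadChar F :=
  quadChar_isQuadratic.inv

lemma quadChar_mul_self : quadChar F * quadChar F = 1 := by
  rw [← sq, quadChar_isQuadratic.sq_eq_one]

lemma mul_inv_mul_quadChar_ne_one {K S : MulChar F ℂ} (h : K ^ 2 ≠ S ^ 2) :
    K * (S⁻¹ * quadChar F) ≠ 1 := fun h1 => h <| by
  rw [eq_inv_of_mul_eq_one_left h1, mul_inv, inv_inv, quadChar_inv, mul_pow, sq (quadChar F),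
    quadChar_mul_self, mul_one]

lemma quadChar_apply_sq {a : F} (ha : a ≠ 0) : quadChar F a ^ 2 = 1 := by
  rw [sq, ← MulChar.mul_apply, quadChar_mul_self, MulChar.one_apply ha.isUnit]

lemma quadChar_apply_inv (a : F) : (quadChar F a)⁻¹ = quadChar F a := by
  rw [← MulChar.inv_apply_eq_inv', quadChar_inv]

lemma quadChar_sq_mul {a : F} (ha : a ≠ 0) (b : F) : quadChar F (a ^ 2 * b) = quadChar F b := by
  rw [map_mul, map_pow, quadChar_apply_sq ha, one_mul]

lemma quadChar_ne_one (hF : ringChar F ≠ 2) : quadChar F ≠ 1 :=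
  (MulChar.ringHomComp_ne_one_iff (Int.castRingHom ℂ).injective_int).mpr (quadraticChar_ne_one hF)

lemma quadChar_eq_neg_one_of_not_isSquare {a : F} (ha : ¬IsSquare a) : quadChar F a = -1 := by
  rw [quadChar, MulChar.ringHomComp_apply, quadraticChar_neg_one_iff_not_isSquare.mpr ha]
  simp

lemma card_filter_sq_eq (hF : ringChar F ≠ 2) (a : F) :
    (Finset.card {x : F | x ^ 2 = a} : ℂ) = 1 + quadChar F a := by
  have h := quadraticChar_card_sqrts hF a
  rw [Set.toFinset_ofPred] at h
  rw [quadChar, MulChar.ringHomComp_apply, eq_intCast, add_comm]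
  exact_mod_cast h

lemma sum_comp_sq (hF : ringChar F ≠ 2) (f : F → ℂ) :
    ∑ x : F, f (x ^ 2) = ∑ a : F, (1 + quadChar F a) * f a := by
  have h := sum_mul_comp_eq_sum_mul_sum_fiber f (fun x : F => x ^ 2) 1
  simpa [card_filter_sq_eq hF, mul_comm] using h

lemma sum_quadChar_one_sub_mul_sq (hF : ringChar F ≠ 2) {t : F} (ht0 : t ≠ 0) :
    ∑ x : F, quadChar F (1 - t * x ^ 2) = -quadChar F (-t) := by
  have hsum : ∑ b : F, quadChar F (1 - b) = 0 :=
    (Equiv.sum_comp (Equiv.subLeft 1) _).trans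
      (MulChar.sum_eq_zero_of_ne_one (quadChar_ne_one hF))
  calc ∑ x : F, quadChar F (1 - t * x ^ 2)
      = ∑ a : F, (1 + quadChar F a) * quadChar F (1 - t * a) :=
        sum_comp_sq hF fun a => quadChar F (1 - t * a)
    _ = ∑ b : F, (1 + quadChar F t * quadChar F b) * quadChar F (1 - b) := by
        refine Fintype.sum_equiv (Equiv.mulLeft₀ t ht0) _ _ fun a => ?_
        rw [Equiv.mulLeft₀_apply, map_mul, ← mul_assoc, ← sq, quadChar_apply_sq ht0, one_mul]
    _ = ∑ b : F, quadChar F (1 - b) + quadChar F t * jacobiSum (quadChar F) (quadChar F)⁻¹ := by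
        simp only [add_mul, one_mul, Finset.sum_add_distrib, mul_assoc, jacobiSum, Finset.mul_sum,
          quadChar_inv]
    _ = -quadChar F (-t) := by
        rw [hsum, jacobiSum_nontrivial_inv (quadChar_ne_one hF), ← mul_neg_one t, map_mul]
        ring

lemma sum_filter_sq_eq_sq (hF : ringChar F ≠ 2) {u : F} (hu : u ≠ 0)
    {M : Type*} [AddCommMonoid M] (f : F → M) :
    ∑ v with v ^ 2 = u ^ 2, f v = f u + f (-u) := by
  have hroots : ({v | v ^ 2 = u ^ 2} : Finset F) = {u, -u} := by
    ext v; simp [sq_eq_sq_iff_eq_or_eq_neg]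
  have hne : u ≠ -u := ((Ring.eq_self_iff_eq_zero_of_char_ne_two hF).not.mpr hu) ∘ Eq.symm
  rw [hroots, Finset.sum_pair hne]

end Characters

section EulerInvolution

/-- The fractional linear involution `x ↦ (1 - x) / (1 - t x)` behind Euler's transformation of
`₂ℙ₁`. -/
def eulerInvolution {F : Type*} [Field F] (t x : F) : F :=
  (1 - x) / (1 - t * x)

variable {F : Type*} [Field F] {t x : F}

lemma one_sub_mul_eulerInvolution (hx : 1 - t * x ≠ 0) :
    1 - t * eulerInvolution t x = (1 - t) / (1 - t * x) := by
  unfold eulerInvolution; field_simp; ring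

lemma one_sub_eulerInvolution (hx : 1 - t * x ≠ 0) :
    1 - eulerInvolution t x = x * (1 - t) / (1 - t * x) := by
  rw [eulerInvolution, one_sub_div hx]; ring

lemma one_sub_mul_eulerInvolution_ne_zero (ht1 : t ≠ 1) (hx : 1 - t * x ≠ 0) :
    1 - t * eulerInvolution t x ≠ 0 := by
  rw [one_sub_mul_eulerInvolution hx]
  exact div_ne_zero (sub_ne_zero.mpr ht1.symm) hx

lemma eulerInvolution_eulerInvolution (ht1 : t ≠ 1) (hx : 1 - t * x ≠ 0) :
    eulerInvolution t (eulerInvolution t x) = x := by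
  rw [eulerInvolution, one_sub_mul_eulerInvolution hx, one_sub_eulerInvolution hx,
    div_div_div_cancel_right₀ hx, mul_div_cancel_right₀ _ (sub_ne_zero.mpr ht1.symm)]

end EulerInvolution

section Periods

variable {F : Type*} [Field F] [Fintype F]

lemma periodP_one_pair (A B C : MulChar F ℂ) (t : F) :
    periodP A [(B, C)] t = ∑ x : F, B x * (B⁻¹ * C) (1 - x) * A⁻¹ (1 - t * x) :=
  rfl

lemma periodP_two_pairs (A B C D E : MulChar F ℂ) (t : F) :
    periodP A [(B, C), (D, E)] t
      = ∑ y : F, D y * (D⁻¹ * E) (1 - y) * periodP A [(B, C)] (t * y) :=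
  rfl

lemma periodP_swap_pairs (A B C D E : MulChar F ℂ) (t : F) :
    periodP A [(B, C), (D, E)] t = periodP A [(D, E), (B, C)] t := by
  simp only [periodP_two_pairs, periodP_one_pair, Finset.mul_sum]
  rw [Finset.sum_comm]
  refine Finset.sum_congr rfl fun x _ => Finset.sum_congr rfl fun y _ => ?_
  rw [mul_left_comm, mul_right_comm t]

lemma periodP_euler_transform (A B C : MulChar F ℂ) {t : F} (ht1 : t ≠ 1) :
    periodP A [(B, C)] t
      = (C * A⁻¹ * B⁻¹) (1 - t) * periodP (C * A⁻¹) [(C * B⁻¹, C)] t := by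
  classical
  have ht : 1 - t ≠ 0 := sub_ne_zero.mpr ht1.symm
  have hchar : (C * B⁻¹)⁻¹ * C = B := by simp
  simp only [periodP_one_pair, Finset.mul_sum, hchar]
  rw [← Finset.sum_filter_of_ne (s := .univ) (p := fun x : F => 1 - t * x ≠ 0),
    ← Finset.sum_filter_of_ne (s := .univ) (p := fun x : F => 1 - t * x ≠ 0)]
  · refine Finset.sum_nbij' (eulerInvolution t) (eulerInvolution t) ?_ ?_ ?_ ?_ ?_ <;>
      simp only [Finset.mem_filter_univ] <;> intro x hx
    · exact one_sub_mul_eulerInvolution_ne_zero ht1 hx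
    · exact one_sub_mul_eulerInvolution_ne_zero ht1 hx
    · exact eulerInvolution_eulerInvolution ht1 hx
    · exact eulerInvolution_eulerInvolution ht1 hx
    · rw [one_sub_mul_eulerInvolution hx, one_sub_eulerInvolution hx, eulerInvolution]
      simp only [MulChar.mul_apply, MulChar.inv_apply_eq_inv', map_div₀, map_mul, mul_inv, inv_inv]
      generalize 1 - t * x = d at hx ⊢
      have hAt := (map_ne_zero A).mpr ht
      have hBt := (map_ne_zero B).mpr ht
      have hCt := (map_ne_zero C).mpr ht
      have hAd := (map_ne_zero A).mpr hx
      have hBd := (map_ne_zero B).mpr hx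
      have hCd := (map_ne_zero C).mpr hx
      field_simp
  · rintro x - h h0
    simp [h0] at h
  · rintro x - h h0
    simp [h0] at h

lemma periodP_inv_inv_eq_sum (A η K : MulChar F ℂ) (s : F) :
    periodP A [(η⁻¹, K⁻¹)] s = ∑ r : F, (η * K⁻¹) (r - 1) * ((K * A) r * A⁻¹ (r - s)) := by
  rw [periodP_one_pair, ← Equiv.sum_comp (Equiv.inv F)]
  refine Finset.sum_congr rfl fun r _ => ?_
  rcases eq_or_ne r 0 with rfl | hr
  · simp
  have h1 : 1 - r⁻¹ = (r - 1) / r := by field_simp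
  have h2 : 1 - s * r⁻¹ = (r - s) / r := by field_simp
  rw [Equiv.inv_apply, h1, h2]
  simp only [MulChar.mul_apply, MulChar.inv_apply_eq_inv', map_div₀, map_inv₀, inv_inv]
  have hη := (map_ne_zero η).mpr hr
  have hK := (map_ne_zero K).mpr hr
  have hA := (map_ne_zero A).mpr hr
  field_simp

lemma mul_periodP_eq_sum (A : MulChar F ℂ) {η K : MulChar F ℂ} (hη : η ≠ 1) (hηK : η * K⁻¹ ≠ 1)
    (t y : F) :
    η y * (η⁻¹ * K) (1 - y) * periodP A [(η⁻¹, K⁻¹)] (t * y)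
      = ∑ u : F, (η * K⁻¹) u *
          ((K * A) (y + u * (1 - y)) * A⁻¹ (y + u * (1 - y) - t * y ^ 2)) := by
  rcases eq_or_ne y 0 with rfl | hy
  · have h (u : F) : (η * K⁻¹) u *
        ((K * A) (0 + u * (1 - 0)) * A⁻¹ (0 + u * (1 - 0) - t * 0 ^ 2)) = η u := by
      have hchar : η * K⁻¹ * (K * A * A⁻¹) = η := by group
      have h1 : 0 + u * (1 - 0) = u := by ring
      have h2 : u - t * 0 ^ 2 = u := by ring
      rw [h1, h2, ← MulChar.mul_apply (K * A), ← MulChar.mul_apply, hchar]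
    rw [Finset.sum_congr rfl fun u _ => h u, MulChar.sum_eq_zero_of_ne_one hη]
    simp
  rcases eq_or_ne y 1 with rfl | hy1
  · simp only [sub_self, mul_zero, add_zero, MulChar.map_zero, zero_mul]
    rw [← Finset.sum_mul, MulChar.sum_eq_zero_of_ne_one hηK, zero_mul]
  have hy1' : 1 - y ≠ 0 := sub_ne_zero.mpr hy1.symm
  rw [periodP_inv_inv_eq_sum, Finset.mul_sum]
  refine (Fintype.sum_equiv ((Equiv.mulRight₀ ((1 - y) / y) (div_ne_zero hy1' hy)).trans
    (Equiv.addRight 1)) _ _ fun u => ?_).symm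
  have h1 : u * ((1 - y) / y) + 1 - 1 = u * (1 - y) / y := by field_simp; ring
  have h2 : u * ((1 - y) / y) + 1 = (y + u * (1 - y)) / y := by field_simp; ring
  have h3 : (y + u * (1 - y)) / y - t * y = (y + u * (1 - y) - t * y ^ 2) / y := by field_simp
  simp only [Equiv.trans_apply, Equiv.mulRight₀_apply, Equiv.coe_addRight]
  rw [h1, h2, h3]
  simp only [MulChar.mul_apply, MulChar.inv_apply_eq_inv', map_div₀, map_mul]
  have hηy := (map_ne_zero η).mpr hy
  have hKy := (map_ne_zero K).mpr hy
  have hAy := (map_ne_zero A).mpr hy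
  have hηy1 := (map_ne_zero η).mpr hy1'
  have hKy1 := (map_ne_zero K).mpr hy1'
  field_simp

end Periods

section ClausenAlgebra

/-- The quadratic form in `(1 - u, 1 - B u)` to which the integrand of `₃ℙ₂` reduces. -/
def clausenForm {F : Type*} [Field F] (t B u : F) : F :=
  B * (1 - u) ^ 2 - t * (1 - B * u) ^ 2

/-- The argument of `S` in the integrand of the product of the two `₂ℙ₁`, where `B` is the quotient
of the two summation variables. It is `0` at its poles, where the integrand vanishes as well. -/
def clausenRatio {F : Type*} [Field F] (t B z : F) : F :=
  (1 - B * z) * (1 - t * z) / (B * (1 - z) * (1 - t * B * z))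

/-- The argument of the quadratic character in the integrand of the product of the two `₂ℙ₁`. -/
def clausenWeight {F : Type*} [Field F] (t B z : F) : F :=
  (1 - t * z) * (1 - t * B * z)

variable {F : Type*} [Field F]

lemma clausenRatio_ne_zero_iff {t B z : F} :
    clausenRatio t B z ≠ 0 ↔
      (1 - B * z ≠ 0 ∧ 1 - t * z ≠ 0) ∧ (B ≠ 0 ∧ 1 - z ≠ 0) ∧ 1 - t * B * z ≠ 0 := by
  simp only [clausenRatio, div_ne_zero_iff, mul_ne_zero_iff]

lemma clausenRatio_eq_iff {t B A z : F} (ht1 : t ≠ 1) (hB : B ≠ 0) (hB1 : B ≠ 1) (hA : A ≠ 0) :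
    clausenRatio t B z = A ↔
      (1 - B * z) * (1 - t * z) - A * (B * (1 - z) * (1 - t * B * z)) = 0 := by
  have hne : (1 - t) * (1 - B) ≠ 0 := mul_ne_zero (sub_ne_zero.mpr ht1.symm)
    (sub_ne_zero.mpr hB1.symm)
  refine ⟨fun h => ?_, fun h => ?_⟩
  · have ⟨_, h₁, h₂⟩ := clausenRatio_ne_zero_iff.mp (h ▸ hA)
    rw [← h, clausenRatio, div_mul_cancel₀ _ (mul_ne_zero (mul_ne_zero h₁.1 h₁.2) h₂), sub_self]
  · have hz : 1 - z ≠ 0 := fun hz => hne <| by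
      linear_combination h + (A * B * (1 - t * B * z) - B - t + t * B * (1 + z)) * hz
    have hz' : 1 - t * B * z ≠ 0 := fun hz' => hne <| by
      linear_combination t * B * h + (t * B * A * B * (1 - z) - B - t + 1 + t * B * z) * hz'
    rw [clausenRatio, div_eq_iff (mul_ne_zero (mul_ne_zero hB hz) hz'), sub_eq_zero.mp h]

lemma clausenRatio_inv {t B z : F} (ht0 : t ≠ 0) (hB : B ≠ 0) (hz : z ≠ 0) :
    clausenRatio t B (t * B * z)⁻¹ = clausenRatio t B z := by
  have hnum : (1 - B * (t * B * z)⁻¹) * (1 - t * (t * B * z)⁻¹)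
      = (1 - B * z) * (1 - t * z) / (t * B * z ^ 2) := by
    field_simp; ring
  have hden : B * (1 - (t * B * z)⁻¹) * (1 - t * B * (t * B * z)⁻¹)
      = B * (1 - z) * (1 - t * B * z) / (t * B * z ^ 2) := by
    field_simp; ring
  rw [clausenRatio, hnum, hden, clausenRatio,
    div_div_div_cancel_right₀ (mul_ne_zero (mul_ne_zero ht0 hB) (pow_ne_zero 2 hz))]

lemma clausenRatio_eq_inv_iff {t B z : F} (ht1 : t ≠ 1) (hB : B ≠ 0) (hB1 : B ≠ 1) :
    clausenRatio t B z = B⁻¹ ↔ z = 0 := by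
  have hne : (1 - t) * (1 - B) ≠ 0 := mul_ne_zero (sub_ne_zero.mpr ht1.symm)
    (sub_ne_zero.mpr hB1.symm)
  have hlin : (1 - B * z) * (1 - t * z) - B⁻¹ * (B * (1 - z) * (1 - t * B * z))
      = (1 - t) * (1 - B) * z := by
    field_simp; ring
  rw [clausenRatio_eq_iff ht1 hB hB1 (inv_ne_zero hB), hlin, mul_eq_zero_iff_left hne]

lemma ne_zero_of_clausenRatio_mul_ne_one {t B z : F} (hB : B ≠ 0)
    (h : clausenRatio t B z * B ≠ 1) : z ≠ 0 := by
  rintro rfl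
  simp [clausenRatio, hB] at h

/-- The derivative at `z` of the quadratic `(1 - B z) (1 - t z) - u² B (1 - z) (1 - t B z)` that
cuts out the fibre of `clausenRatio t B` over `u²`; on the fibre it is a square root of the
discriminant. -/
def clausenFiberDeriv (t B u z : F) : F :=
  2 * (1 - B * u ^ 2) * (t * B) * z - (B + t - B * u ^ 2 - B * u ^ 2 * (t * B))

lemma clausenFiberDeriv_sq_sub (t B u z : F) :
    clausenFiberDeriv t B u z ^ 2 - clausenForm t B u * clausenForm t B (-u)
      = 2 * 2 * (1 - B * u ^ 2) * (t * B)
        * ((1 - B * z) * (1 - t * z) - u ^ 2 * (B * (1 - z) * (1 - t * B * z))) := by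
  unfold clausenFiberDeriv clausenForm; ring

lemma clausenRatio_eq_sq_iff (hF : ringChar F ≠ 2) {t B u z : F} (ht0 : t ≠ 0) (ht1 : t ≠ 1)
    (hB : B ≠ 0) (hB1 : B ≠ 1) (hu : u ≠ 0) (huB : B * u ^ 2 ≠ 1) :
    clausenRatio t B z = u ^ 2 ↔
      clausenFiberDeriv t B u z ^ 2 = clausenForm t B u * clausenForm t B (-u) := by
  have h2 : (2 : F) ≠ 0 := Ring.two_ne_zero hF
  have hcoeff : 2 * 2 * (1 - B * u ^ 2) * (t * B) ≠ 0 :=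
    mul_ne_zero (mul_ne_zero (mul_ne_zero h2 h2) (sub_ne_zero.mpr huB.symm)) (mul_ne_zero ht0 hB)
  rw [clausenRatio_eq_iff ht1 hB hB1 (pow_ne_zero 2 hu),
    ← sub_eq_zero (a := clausenFiberDeriv t B u z ^ 2), clausenFiberDeriv_sq_sub,
    mul_eq_zero_iff_left hcoeff]

lemma clausenForm_ne_zero_or (hF : ringChar F ≠ 2) {t B u : F}
    (hB : B ≠ 0) (hB1 : B ≠ 1) (hu : u ≠ 0) (huB : B * u ^ 2 ≠ 1) :
    clausenForm t B u ≠ 0 ∨ clausenForm t B (-u) ≠ 0 := by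
  by_contra! h
  have h2 : (2 : F) ≠ 0 := Ring.two_ne_zero hF
  have hne : B * (2 * 2 * u * (B - 1) * (1 - B * u ^ 2)) ≠ 0 :=
    mul_ne_zero hB (mul_ne_zero (mul_ne_zero (mul_ne_zero (mul_ne_zero h2 h2) hu)
      (sub_ne_zero.mpr hB1)) (sub_ne_zero.mpr huB.symm))
  refine hne ?_
  unfold clausenForm at h
  linear_combination (u * B + 1) ^ 2 * h.1 - (u * B - 1) ^ 2 * h.2

end ClausenAlgebra

section Clausen

variable {F : Type*} [Field F] [Fintype F] [DecidableEq F]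

lemma sum_quadChar_affine (hF : ringChar F ≠ 2) {χ : MulChar F ℂ} (hχ : χ ≠ 1)
    {t : F} (ht0 : t ≠ 0) (u : F) :
    ∑ y : F, χ (y + u * (1 - y)) * quadChar F (y + u * (1 - y) - t * y ^ 2)
      = ∑ w : F, χ w * quadChar F (w * (1 - u) ^ 2 - t * (w - u) ^ 2) := by
  -- For `u = 1` the substitution `w = y + u (1 - y)` degenerates, but both sums are `-φ(-t)`.
  rcases eq_or_ne u 1 with rfl | hu
  · have h (w : F) : quadChar F (w * (1 - 1) ^ 2 - t * (w - 1) ^ 2)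
        = quadChar F (-t) * (1 : MulChar F ℂ) (1 - w) := by
      rw [← quadChar_mul_self, MulChar.mul_apply, ← map_mul, ← map_mul]
      ring_nf
    simp_rw [h, mul_left_comm _ (quadChar F (-t)), ← Finset.mul_sum,
      sum_mulChar_mul_one_one_sub hχ]
    simp [sum_quadChar_one_sub_mul_sq hF ht0]
  · have hu' : 1 - u ≠ 0 := sub_ne_zero.mpr hu.symm
    refine Fintype.sum_equiv ((Equiv.mulRight₀ (1 - u) hu').trans (Equiv.addRight u)) _ _
      fun y => ?_
    have h1 : y * (1 - u) + u = y + u * (1 - y) := by ring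
    have h2 : (y + u * (1 - y)) * (1 - u) ^ 2 - t * (y + u * (1 - y) - u) ^ 2
        = (1 - u) ^ 2 * (y + u * (1 - y) - t * y ^ 2) := by ring
    simp only [Equiv.trans_apply, Equiv.mulRight₀_apply, Equiv.coe_addRight]
    rw [h1, h2, quadChar_sq_mul hu']

theorem periodP_eq_sum_clausenForm (hF : ringChar F ≠ 2) {η K : MulChar F ℂ} (hη : η ≠ 1)
    (hK : K * quadChar F ≠ 1) (hηK : η * K⁻¹ ≠ 1) {t : F} (ht0 : t ≠ 0) :
    periodP (quadChar F) [(η⁻¹, K⁻¹), (η, K)] t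
      = ∑ B : F, (K * quadChar F) B * ∑ u : F, (η * K) u * quadChar F (clausenForm t B u) := by
  rw [periodP_two_pairs]
  simp_rw [mul_periodP_eq_sum _ hη hηK, quadChar_inv]
  rw [Finset.sum_comm]
  simp_rw [← Finset.mul_sum, sum_quadChar_affine hF hK ht0, Finset.mul_sum]
  rw [Finset.sum_comm (γ := F) (f := fun B u => (K * quadChar F) B * _)]
  refine Finset.sum_congr rfl fun u _ => ?_
  rcases eq_or_ne u 0 with rfl | hu
  · simp
  refine (Fintype.sum_equiv (Equiv.mulLeft₀ (u ^ 2) (pow_ne_zero 2 hu)) _ _ fun B => ?_).symm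
  have h : u ^ 2 * B * (1 - u) ^ 2 - t * (u ^ 2 * B - u) ^ 2 = u ^ 2 * clausenForm t B u := by
    unfold clausenForm; ring
  rw [Equiv.mulLeft₀_apply, h, quadChar_sq_mul hu]
  simp only [MulChar.mul_apply, quadChar_sq_mul hu]
  simp only [MulChar.inv_apply_eq_inv', map_mul, map_pow]
  have hKu := (map_ne_zero K).mpr hu
  field_simp

theorem periodP_mul_periodP_inv {S K : MulChar F ℂ} (hSK : K * S⁻¹ ≠ 1) (t : F) :
    periodP (quadChar F * S) [(K * S⁻¹, K)] t
        * periodP (quadChar F * S⁻¹) [(K⁻¹ * S, K⁻¹)] t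
      = ∑ B : F, K B * ∑ z : F, S (clausenRatio t B z) * quadChar F (clausenWeight t B z) := by
  have hS : (K * S⁻¹)⁻¹ * K = S := by simp
  have hS' : (K⁻¹ * S)⁻¹ * K⁻¹ = S⁻¹ := by simp
  simp_rw [periodP_one_pair, hS, hS', Finset.sum_mul_sum, Finset.mul_sum]
  rw [Finset.sum_comm, Finset.sum_comm (γ := F) (f := fun B z => K B * _)]
  refine Finset.sum_congr rfl fun z _ => ?_
  rcases eq_or_ne z 0 with rfl | hz
  · have h (B : F) : K B * (S (clausenRatio t B 0) * quadChar F (clausenWeight t B 0))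
        = (K * S⁻¹) B := by
      simp [clausenRatio, clausenWeight, MulChar.inv_apply']
    rw [Finset.sum_congr rfl fun B _ => h B, MulChar.sum_eq_zero_of_ne_one hSK]
    simp
  refine (Fintype.sum_equiv (Equiv.mulRight₀ z hz) _ _ fun B => ?_).symm
  rw [Equiv.mulRight₀_apply, clausenRatio, clausenWeight, ← mul_assoc t]
  simp only [MulChar.mul_apply, MulChar.inv_apply_eq_inv', map_div₀, map_mul, mul_inv, inv_inv,
    quadChar_apply_inv]
  rcases eq_or_ne B 0 with rfl | hB
  · simp
  have hSz := (map_ne_zero S).mpr hz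
  have hKz := (map_ne_zero K).mpr hz
  have hSB := (map_ne_zero S).mpr hB
  have hKB := (map_ne_zero K).mpr hB
  field_simp

lemma quadChar_clausenWeight_inv {t B z : F} (ht0 : t ≠ 0) (hz : z ≠ 0)
    (h : clausenRatio t B z ≠ 0) :
    quadChar F (clausenWeight t B (t * B * z)⁻¹)
      = quadChar F (clausenRatio t B z) * quadChar F (clausenWeight t B z) := by
  obtain ⟨⟨-, htz⟩, ⟨hB, hz1⟩, htBz⟩ := clausenRatio_ne_zero_iff.mp h
  have hweight : clausenWeight t B (t * B * z)⁻¹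
      = ((1 - z) / (z * (1 - t * z))) ^ 2 * (clausenRatio t B z * clausenWeight t B z) := by
    unfold clausenRatio clausenWeight; field_simp; ring
  rw [hweight, quadChar_sq_mul (div_ne_zero hz1 (mul_ne_zero hz htz)), map_mul]

lemma sum_fiber_clausenRatio_of_not_isSquare {t B A : F} (ht0 : t ≠ 0) (hB : B ≠ 0)
    (hAB : A * B ≠ 1) (hA : ¬IsSquare A) :
    ∑ z with clausenRatio t B z = A, quadChar F (clausenWeight t B z) = 0 := by
  have hz {z : F} (h : clausenRatio t B z = A) : z ≠ 0 :=
    ne_zero_of_clausenRatio_mul_ne_one hB (h ▸ hAB)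
  have hA0 : A ≠ 0 := fun h => hA (h ▸ IsSquare.zero)
  refine self_eq_neg.mp ?_
  rw [← Finset.sum_neg_distrib]
  refine Finset.sum_nbij' (fun z => (t * B * z)⁻¹) (fun z => (t * B * z)⁻¹) ?_ ?_ ?_ ?_ ?_ <;>
    simp only [Finset.mem_filter_univ] <;> intro z h
  · rw [clausenRatio_inv ht0 hB (hz h), h]
  · rw [clausenRatio_inv ht0 hB (hz h), h]
  · field_simp
  · field_simp
  · rw [quadChar_clausenWeight_inv ht0 (hz h) (h ▸ hA0), h,
      quadChar_eq_neg_one_of_not_isSquare hA, neg_one_mul, neg_neg]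

lemma card_fiber_clausenRatio (hF : ringChar F ≠ 2) {t B u : F} (ht0 : t ≠ 0) (ht1 : t ≠ 1)
    (hB : B ≠ 0) (hB1 : B ≠ 1) (hu : u ≠ 0) (huB : B * u ^ 2 ≠ 1) :
    (Finset.card {z | clausenRatio t B z = u ^ 2} : ℂ)
      = 1 + quadChar F (clausenForm t B u * clausenForm t B (-u)) := by
  have hs : 2 * (1 - B * u ^ 2) * (t * B) ≠ 0 :=
    mul_ne_zero (mul_ne_zero (Ring.two_ne_zero hF) (sub_ne_zero.mpr huB.symm)) (mul_ne_zero ht0 hB)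
  rw [← card_filter_sq_eq hF, Nat.cast_inj]
  let derivEquiv : F ≃ F := (Equiv.mulLeft₀ _ hs).trans
    (Equiv.subRight (B + t - B * u ^ 2 - B * u ^ 2 * (t * B)))
  refine Finset.card_equiv derivEquiv fun z => ?_
  rw [Finset.mem_filter_univ, Finset.mem_filter_univ,
    clausenRatio_eq_sq_iff hF ht0 ht1 hB hB1 hu huB]
  rfl

lemma quadChar_clausenWeight_of_clausenRatio_eq_sq (hF : ringChar F ≠ 2) {t B u z : F} (ht1 : t ≠ 1)
    (hB1 : B ≠ 1) (hu : u ≠ 0) (huB : B * u ^ 2 ≠ 1)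
    (hform : clausenForm t B u ≠ 0) (hz : clausenRatio t B z = u ^ 2) :
    quadChar F (clausenWeight t B z)
      = quadChar F ((1 - t) * (B * clausenForm t B u)) := by
  have h2s : 2 * (1 - B * u ^ 2) ≠ 0 :=
    mul_ne_zero (Ring.two_ne_zero hF) (sub_ne_zero.mpr huB.symm)
  have hne := clausenRatio_ne_zero_iff.mp (hz ▸ pow_ne_zero 2 hu)
  have hB : B ≠ 0 := hne.2.1.1
  have hweight : clausenWeight t B z ≠ 0 := mul_ne_zero hne.1.2 hne.2.2
  have hBform : B * clausenForm t B u ≠ 0 := mul_ne_zero hB hform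
  -- On the fibre, `(1 - t) * B * clausenForm t B u * clausenWeight t B z` is a square.
  have hsq :
      ((1 + B * u) * clausenForm t B u - (1 - B * u) * clausenFiberDeriv t B u z) ^ 2 * (1 - t)
        = (2 * (1 - B * u ^ 2)) ^ 2 * (clausenWeight t B z * (B * clausenForm t B u)) := by
    rw [clausenRatio_eq_iff ht1 hB hB1 (pow_ne_zero 2 hu)] at hz
    unfold clausenFiberDeriv clausenForm clausenWeight
    linear_combination 4 * (1 - B * u ^ 2) * (t * B) * ((1 - t) * (1 - B * u) ^ 2
      - (B * (1 - u) ^ 2 - t * (1 - B * u) ^ 2)) * hz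
  have hroot : (1 + B * u) * clausenForm t B u - (1 - B * u) * clausenFiberDeriv t B u z ≠ 0 := by
    intro h
    rw [h, zero_pow two_ne_zero, zero_mul] at hsq
    exact mul_ne_zero (pow_ne_zero 2 h2s) (mul_ne_zero hweight hBform) hsq.symm
  have hφ := congrArg (quadChar F) hsq
  rw [quadChar_sq_mul hroot, quadChar_sq_mul h2s, map_mul] at hφ
  rw [map_mul _ (1 - t), hφ, mul_assoc (quadChar F _), ← sq, quadChar_apply_sq hBform, mul_one]

lemma sum_fiber_clausenRatio_of_clausenForm_ne_zero (hF : ringChar F ≠ 2) {t B u : F} (ht0 : t ≠ 0)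
    (ht1 : t ≠ 1) (hB : B ≠ 0) (hB1 : B ≠ 1) (hu : u ≠ 0) (huB : B * u ^ 2 ≠ 1)
    (hform : clausenForm t B u ≠ 0) :
    ∑ z with clausenRatio t B z = u ^ 2, quadChar F (clausenWeight t B z)
      = quadChar F ((1 - t) * B)
        * (quadChar F (clausenForm t B u) + quadChar F (clausenForm t B (-u))) := by
  have hconst (z : F) (hz : z ∈ ({z | clausenRatio t B z = u ^ 2} : Finset F)) :=
    quadChar_clausenWeight_of_clausenRatio_eq_sq hF ht1 hB1 hu huB hform
      ((Finset.mem_filter_univ z).mp hz)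
  rw [Finset.sum_congr rfl hconst, Finset.sum_const, nsmul_eq_mul,
    card_fiber_clausenRatio hF ht0 ht1 hB hB1 hu huB]
  simp only [map_mul]
  linear_combination quadChar F (1 - t) * quadChar F B * quadChar F (clausenForm t B (-u))
    * quadChar_apply_sq hform

lemma sum_fiber_clausenRatio_of_sq (hF : ringChar F ≠ 2) {t B u : F} (ht0 : t ≠ 0)
    (ht1 : t ≠ 1) (hB : B ≠ 0) (hB1 : B ≠ 1) (hu : u ≠ 0) (huB : B * u ^ 2 ≠ 1) :
    ∑ z with clausenRatio t B z = u ^ 2, quadChar F (clausenWeight t B z)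
      = quadChar F ((1 - t) * B)
        * (quadChar F (clausenForm t B u) + quadChar F (clausenForm t B (-u))) := by
  rcases clausenForm_ne_zero_or hF (t := t) hB hB1 hu huB with h | h
  · exact sum_fiber_clausenRatio_of_clausenForm_ne_zero hF ht0 ht1 hB hB1 hu huB h
  · have hneg := sum_fiber_clausenRatio_of_clausenForm_ne_zero hF ht0 ht1 hB hB1
      (neg_ne_zero.mpr hu) (by rwa [neg_sq]) h
    rwa [neg_sq, neg_neg, add_comm (quadChar F _)] at hneg

lemma sum_fiber_clausenRatio (hF : ringChar F ≠ 2) {t B A : F} (ht0 : t ≠ 0) (ht1 : t ≠ 1)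
    (hB : B ≠ 0) (hB1 : B ≠ 1) (hA : A ≠ 0) (hAB : A * B ≠ 1) :
    ∑ z with clausenRatio t B z = A, quadChar F (clausenWeight t B z)
      = quadChar F ((1 - t) * B) * ∑ u with u ^ 2 = A, quadChar F (clausenForm t B u) := by
  by_cases hsq : IsSquare A
  · obtain ⟨u, rfl⟩ := isSquare_iff_exists_sq A |>.mp hsq
    have hu : u ≠ 0 := by rintro rfl; simp at hA
    rw [sum_filter_sq_eq_sq hF hu,
      sum_fiber_clausenRatio_of_sq hF ht0 ht1 hB hB1 hu (by rwa [mul_comm])]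
  · have hempty : ({u | u ^ 2 = A} : Finset F) = ∅ :=
      Finset.filter_eq_empty_iff.mpr fun u _ h => hsq ⟨u, by rw [← h, sq]⟩
    rw [sum_fiber_clausenRatio_of_not_isSquare ht0 hB hAB hsq, hempty, Finset.sum_empty, mul_zero]

lemma sum_fiber_clausenRatio_inv (hF : ringChar F ≠ 2) {t B : F} (ht1 : t ≠ 1)
    (hB : B ≠ 0) (hB1 : B ≠ 1) :
    ∑ z with clausenRatio t B z = B⁻¹, quadChar F (clausenWeight t B z) + quadChar F B
      = quadChar F ((1 - t) * B) * ∑ u with u ^ 2 = B⁻¹, quadChar F (clausenForm t B u) := by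
  have hsum (u : F) (hu : u ∈ ({u | u ^ 2 = B⁻¹} : Finset F)) :
      quadChar F (clausenForm t B u) = quadChar F ((1 - t) * B) := by
    have hu2 : B * u ^ 2 = 1 := by
      rw [(Finset.mem_filter_univ u).mp hu, mul_inv_cancel₀ hB]
    have hu1 : 1 - u ≠ 0 := fun h => hB1 <| by linear_combination hu2 + B * (1 + u) * h
    have hform : clausenForm t B u = (1 - u) ^ 2 * ((1 - t) * B) := by
      unfold clausenForm; linear_combination t * (1 - B) * hu2
    rw [hform, quadChar_sq_mul hu1]
  have hne : (1 - t) * B ≠ 0 := mul_ne_zero (sub_ne_zero.mpr ht1.symm) hB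
  simp only [clausenRatio_eq_inv_iff ht1 hB hB1]
  rw [Finset.sum_congr rfl hsum, Finset.sum_const, nsmul_eq_mul, card_filter_sq_eq hF, map_inv₀,
    quadChar_apply_inv, mul_left_comm, ← sq, quadChar_apply_sq hne]
  simp [Finset.filter_eq', clausenWeight]

lemma sum_clausenRatio_add_of_ne_one (hF : ringChar F ≠ 2) (S : MulChar F ℂ) {t B : F} (ht0 : t ≠ 0)
    (ht1 : t ≠ 1) (hB : B ≠ 0) (hB1 : B ≠ 1) :
    ∑ z : F, S (clausenRatio t B z) * quadChar F (clausenWeight t B z)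
        + (S⁻¹ * quadChar F) B
      = quadChar F ((1 - t) * B) * ∑ u : F, (S ^ 2) u * quadChar F (clausenForm t B u) := by
  have hS2 (u : F) : (S ^ 2) u = S (u ^ 2) := by rw [MulChar.pow_apply' _ two_ne_zero, map_pow]
  have hB' : (S⁻¹ * quadChar F) B = ∑ A : F, S A * if A = B⁻¹ then quadChar F B else 0 := by
    simp [MulChar.mul_apply, MulChar.inv_apply']
  simp_rw [hS2]
  rw [sum_mul_comp_eq_sum_mul_sum_fiber S (clausenRatio t B),
    sum_mul_comp_eq_sum_mul_sum_fiber S (fun u : F => u ^ 2), hB', ← Finset.sum_add_distrib,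
    Finset.mul_sum]
  refine Finset.sum_congr rfl fun A _ => ?_
  rw [← mul_add, mul_left_comm]
  rcases eq_or_ne A 0 with rfl | hA
  · simp only [MulChar.map_zero, zero_mul]
  rcases eq_or_ne A B⁻¹ with rfl | hAB
  · rw [if_pos rfl, sum_fiber_clausenRatio_inv hF ht1 hB hB1]
  · rw [if_neg hAB, add_zero, sum_fiber_clausenRatio hF ht0 ht1 hB hB1 hA
      (mt eq_inv_of_mul_eq_one_left hAB)]

lemma sum_clausenRatio_one (S : MulChar F ℂ) {t : F} (ht0 : t ≠ 0) (ht1 : t ≠ 1) :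
    ∑ z : F, S (clausenRatio t 1 z) * quadChar F (clausenWeight t 1 z)
      = Fintype.card F - 2 := by
  have hsummand (z : F) :
      S (clausenRatio t 1 z) * quadChar F (clausenWeight t 1 z)
        = 1 - (if z = 1 then 1 else 0) - (if z = t⁻¹ then 1 else 0) := by
    rcases eq_or_ne z 1 with rfl | hz1
    · have h1t : 1 ≠ t⁻¹ := fun h => ht1 (inv_eq_one.mp h.symm)
      simp [clausenRatio, h1t]
    rcases eq_or_ne z t⁻¹ with rfl | hzt
    · simp [clausenWeight, hz1, ht0]
    have h1 : 1 - z ≠ 0 := sub_ne_zero.mpr hz1.symm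
    have ht : 1 - t * z ≠ 0 := sub_ne_zero.mpr fun h => hzt (eq_inv_of_mul_eq_one_right h.symm)
    have hratio : clausenRatio t 1 z = 1 := by
      rw [clausenRatio, mul_one, one_mul, one_mul, div_self (mul_ne_zero h1 ht)]
    rw [hratio, map_one, clausenWeight, mul_one, one_mul, ← sq, map_pow, quadChar_apply_sq ht,
      if_neg hz1, if_neg hzt]
    ring
  rw [Finset.sum_congr rfl fun z _ => hsummand z]
  simp only [Finset.sum_sub_distrib, Finset.sum_const, Finset.card_univ, nsmul_eq_mul, mul_one,
    Finset.sum_ite_eq', Finset.mem_univ, if_true]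
  ring

lemma sum_quadChar_clausenForm_one {χ : MulChar F ℂ} (hχ : χ ≠ 1) {t : F} (ht1 : t ≠ 1) :
    quadChar F (1 - t) * ∑ u : F, χ u * quadChar F (clausenForm t 1 u) = -1 := by
  have hform (u : F) :
      quadChar F (clausenForm t 1 u) = quadChar F (1 - t) * (1 : MulChar F ℂ) (1 - u) := by
    rw [← quadChar_mul_self, MulChar.mul_apply, ← map_mul, ← map_mul, clausenForm]
    ring_nf
  simp_rw [hform, mul_left_comm (χ _), ← Finset.mul_sum, sum_mulChar_mul_one_one_sub hχ]
  rw [← mul_assoc, ← sq, quadChar_apply_sq (sub_ne_zero.mpr ht1.symm), one_mul]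

lemma quadChar_mul_sum_clausenForm (hF : ringChar F ≠ 2) {S : MulChar F ℂ} (hS : S ^ 2 ≠ 1)
    {t : F} (ht0 : t ≠ 0) (ht1 : t ≠ 1) {B : F} (hB : B ≠ 0) :
    quadChar F ((1 - t) * B) * ∑ u : F, (S ^ 2) u * quadChar F (clausenForm t B u)
      = ∑ z : F, S (clausenRatio t B z) * quadChar F (clausenWeight t B z)
        + (S⁻¹ * quadChar F) B - if B = 1 then (Fintype.card F : ℂ) else 0 := by
  rcases eq_or_ne B 1 with rfl | hB1
  · rw [mul_one (1 - t), sum_quadChar_clausenForm_one hS ht1, sum_clausenRatio_one S ht0 ht1,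
      map_one, if_pos rfl]
    ring
  · rw [if_neg hB1, sub_zero, sum_clausenRatio_add_of_ne_one hF S ht0 ht1 hB hB1]

lemma sum_clausenForm_eq_sum_clausenRatio (hF : ringChar F ≠ 2) {K S : MulChar F ℂ}
    (hS : S ^ 2 ≠ 1) (hKS : K * (S⁻¹ * quadChar F) ≠ 1) {t : F} (ht0 : t ≠ 0) (ht1 : t ≠ 1) :
    quadChar F (1 - t) * ∑ B : F, (K * quadChar F) B *
        ∑ u : F, (S ^ 2) u * quadChar F (clausenForm t B u)
      = ∑ B : F, K B * ∑ z : F, S (clausenRatio t B z) * quadChar F (clausenWeight t B z)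
        - Fintype.card F := by
  have hfixed (B : F) :
      quadChar F (1 - t) * ((K * quadChar F) B *
          ∑ u : F, (S ^ 2) u * quadChar F (clausenForm t B u))
        = K B * ∑ z : F, S (clausenRatio t B z) * quadChar F (clausenWeight t B z)
          + (K * (S⁻¹ * quadChar F)) B
          - K B * if B = 1 then (Fintype.card F : ℂ) else 0 := by
    rcases eq_or_ne B 0 with rfl | hB
    · simp only [MulChar.map_zero, zero_mul, mul_zero, add_zero, sub_zero]
    rw [MulChar.mul_apply K (S⁻¹ * _), ← mul_add, ← mul_sub,
      ← quadChar_mul_sum_clausenForm hF hS ht0 ht1 hB, MulChar.mul_apply, map_mul]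
    ring
  rw [Finset.mul_sum, Finset.sum_congr rfl fun B _ => hfixed B, Finset.sum_sub_distrib,
    Finset.sum_add_distrib, MulChar.sum_eq_zero_of_ne_one hKS]
  simp

lemma periodP_quadChar_euler_transform (K S : MulChar F ℂ) {t : F} (ht1 : t ≠ 1) :
    periodP (quadChar F * K * S⁻¹) [(S, K)] t
      = quadChar F (1 - t) * periodP (quadChar F * S) [(K * S⁻¹, K)] t := by
  have hnum : K * (quadChar F * K * S⁻¹)⁻¹ = quadChar F * S := by
    rw [mul_inv, mul_inv, quadChar_inv, inv_inv, mul_right_comm, mul_inv_cancel_comm_assoc]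
  rw [periodP_euler_transform _ _ _ ht1, hnum, mul_inv_cancel_right]

end Clausen

/-- The Evans–Greene finite-field Clausen formula for `₃ℙ₂(φ,η,η̄;K,K̄;t)` at
`t ≠ 0, 1`, when `ηK = S²` is a square. -/
theorem statement2 {F : Type*} [Field F] [Fintype F] [DecidableEq F]
    (hodd : ringChar F ≠ 2) (η K S : MulChar F ℂ)
    (hη : η ≠ 1) (hKφ : K * quadChar F ≠ 1) (hηK : η * K ≠ 1) (hηK' : η * K⁻¹ ≠ 1)
    (hS : η * K = S ^ 2) (t : F) (ht0 : t ≠ 0) (ht1 : t ≠ 1) :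
    periodP (quadChar F) [(η, K), (η⁻¹, K⁻¹)] t
      = quadChar F (1 - t)
          * (periodP (quadChar F * K * S⁻¹) [(S, K)] t
              * periodP (quadChar F * K⁻¹ * S) [(S⁻¹, K⁻¹)] t
            - (Fintype.card F : ℂ)) := by
  have hK2 : K ^ 2 ≠ S ^ 2 := fun h =>
    hηK' (mul_inv_eq_one.mpr (mul_right_cancel (hS.trans (h.symm.trans (sq K)))))
  have hKS : K * S⁻¹ ≠ 1 := fun h => hK2 (by rw [mul_inv_eq_one.mp h])
  have hφ : quadChar F (1 - t) ^ 2 = 1 := quadChar_apply_sq (sub_ne_zero.mpr ht1.symm)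
  have heuler := periodP_quadChar_euler_transform K S ht1
  have heuler_inv := periodP_quadChar_euler_transform K⁻¹ S⁻¹ ht1
  rw [inv_inv] at heuler_inv
  have hcompare := sum_clausenForm_eq_sum_clausenRatio hodd (hS ▸ hηK)
    (mul_inv_mul_quadChar_ne_one hK2) ht0 ht1
  rw [← hS, ← periodP_eq_sum_clausenForm hodd hη hKφ hηK' ht0, ← periodP_mul_periodP_inv hKS,
    periodP_swap_pairs] at hcompare
  rw [heuler, heuler_inv, mul_mul_mul_comm, ← sq, hφ, one_mul, ← hcompare, ← mul_assoc, ← sq, hφ,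
    one_mul]
end

section
/- Let 𝔽_q be a finite field of odd characteristic and let η, K, S be multiplicative characters of 𝔽_q^× such that none of η, Kφ, ηK, ηK̄ is trivial and ηK = S². Then ₃ℙ₂(φ, η, η̄; K, K̄; 1; q) = ( J(ηK, η̄K) / J(φ, K̄) ) · ( J(SK̄, φS̄)² + J(φSK̄, S̄)² ). -/
/-
The substitution `y = z x` turns the double sum defining `₃ℙ₂` into a sum over `z`, whose inner sum
over `x` is normalised by the involution `x ↦ (1 - x) / (1 - z x)`: it carries `1 - z x²` to
`(1 - z)(1 - z w²)` up to a square. Since `η K⁻¹ = (S K⁻¹)²`, the variable `w` then occurs only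
through `w²`, and summing over squares splits the result into two products of Jacobi sums, one for
each square root `S`, `φ S` of `η K`. The duplication formula for Gauss sums identifies each
product with the corresponding term of the evaluation.
-/

theorem isUnit_four_of_ringChar_ne_two {F : Type*} [Field F] (hF : ringChar F ≠ 2) :
    IsUnit (4 : F) := by
  rw [show (4 : F) = 2 ^ 2 by norm_num]
  exact (Ring.two_ne_zero hF).isUnit.pow 2

section QuadraticCharacter

section CommMonoid

variable {M R : Type*} [CommMonoid M] [CommRing R] {φ : MulChar M R}

theorem map_mul_sq_of_isQuadratic (hφ : φ.IsQuadratic) (a : M) {b : M} (hb : IsUnit b) :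
    φ (a * b ^ 2) = φ a := by
  rw [map_mul, map_pow, ← MulChar.pow_apply' φ two_ne_zero, hφ.sq_eq_one, MulChar.one_apply hb,
    mul_one]

theorem map_eq_one_of_isQuadratic_of_isSquare (hφ : φ.IsQuadratic) {a : M} (ha : IsUnit a)
    (hsq : IsSquare a) : φ a = 1 := by
  obtain ⟨b, rfl⟩ := hsq
  simpa [sq] using map_mul_sq_of_isQuadratic hφ 1 (isUnit_of_mul_isUnit_left ha)

theorem mul_ne_one_of_sq_ne_one (hφ : φ.IsQuadratic) {χ : MulChar M R} (hχ : χ ^ 2 ≠ 1) :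
    χ * φ ≠ 1 := fun h ↦ hχ <| by
  rw [eq_inv_of_mul_eq_one_left h, hφ.inv, hφ.sq_eq_one]

end CommMonoid

variable {F R : Type*} [Field F] [CommRing R] {φ : MulChar F R}

theorem ringChar_ne_two_of_isQuadratic [Finite F] (hφ : φ.IsQuadratic) (hφ1 : φ ≠ 1) :
    ringChar F ≠ 2 :=
  fun h ↦ hφ1 <| MulChar.eq_one_iff.mpr fun a ↦
    map_eq_one_of_isQuadratic_of_isSquare hφ a.isUnit (FiniteField.isSquare_of_char_two h a)

theorem eq_quadraticChar_of_isQuadratic [Fintype F] [DecidableEq F] (hφ : φ.IsQuadratic)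
    (hφ1 : φ ≠ 1) : φ = (quadraticChar F).ringHomComp (Int.castRingHom R) := by
  obtain ⟨u, hu⟩ := MulChar.ne_one_iff.mp hφ1
  have : Nontrivial R := nontrivial_of_ne _ _ hu
  have hu_nonsquare : ¬IsSquare (u : F) := fun h ↦
    hu (map_eq_one_of_isQuadratic_of_isSquare hφ u.isUnit h)
  have hφu : φ u = -1 := by
    rcases hφ u with h | h | h
    · exact absurd (h ▸ u.isUnit.map φ) not_isUnit_zero
    · exact absurd h hu
    · exact h
  ext a
  by_cases ha : IsSquare (a : F)
  · simp [MulChar.ringHomComp_apply, map_eq_one_of_isQuadratic_of_isSquare hφ a.isUnit ha,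
      (quadraticChar_one_iff_isSquare a.ne_zero).mpr ha]
  · have hχa : quadraticChar F a = -1 := quadraticChar_neg_one_iff_not_isSquare.mpr ha
    have hau_square : IsSquare ((a * u : Fˣ) : F) := by
      rw [← quadraticChar_one_iff_isSquare (a * u).ne_zero, Units.val_mul, map_mul, hχa,
        quadraticChar_neg_one_iff_not_isSquare.mpr hu_nonsquare, neg_one_mul, neg_neg]
    have hφau : φ a * φ u = 1 := by
      rw [← map_mul, ← Units.val_mul,
        map_eq_one_of_isQuadratic_of_isSquare hφ (a * u).isUnit hau_square]
    have hφa : φ a = -1 := by linear_combination -hφau + φ a * hφu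
    simp [MulChar.ringHomComp_apply, hχa, hφa]

theorem eq_one_or_eq_of_sq_eq_one [Finite F] [IsDomain R] (hφ : φ.IsQuadratic)
    (hφ1 : φ ≠ 1) {χ : MulChar F R} (hχ : χ ^ 2 = 1) : χ = 1 ∨ χ = φ := by
  classical
  have := Fintype.ofFinite F
  refine or_iff_not_imp_left.mpr fun hχ1 ↦ ?_
  rw [eq_quadraticChar_of_isQuadratic hφ hφ1,
    eq_quadraticChar_of_isQuadratic (MulChar.isQuadratic_iff_sq_eq_one.mpr hχ) hχ1]

variable [Fintype F]

theorem sum_comp_sq_s3 (hφ : φ.IsQuadratic) (hφ1 : φ ≠ 1) (f : F → R) :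
    ∑ w, f (w ^ 2) = ∑ t, (1 + φ t) * f t := by
  classical
  rw [← Finset.sum_fiberwise' (s := Finset.univ) (g := fun w : F ↦ w ^ 2) (f := f)]
  refine Finset.sum_congr rfl fun t _ ↦ ?_
  have card_sqrts : (({w | w ^ 2 = t} : Finset F).card : R) = 1 + φ t := by
    have h := congrArg (Int.cast : ℤ → R)
      (quadraticChar_card_sqrts (ringChar_ne_two_of_isQuadratic hφ hφ1) t)
    rw [eq_quadraticChar_of_isQuadratic hφ hφ1, MulChar.ringHomComp_apply, add_comm]
    simpa using h
  rw [Finset.sum_const, nsmul_eq_mul, card_sqrts]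

variable [IsDomain R]

theorem sum_mulChar_one_sub {χ : MulChar F R} (hχ : χ ≠ 1) : ∑ t, χ (1 - t) = 0 := by
  rw [← MulChar.sum_eq_zero_of_ne_one hχ]
  exact (Equiv.subLeft (1 : F)).sum_comp χ

theorem sum_quadratic_one_sub_sq (hφ : φ.IsQuadratic) (hφ1 : φ ≠ 1) :
    ∑ x, φ (1 - x ^ 2) = -φ (-1) := by
  have hJ : ∑ t, φ t * φ (1 - t) = -φ (-1) := by
    simpa only [hφ.inv, jacobiSum] using jacobiSum_nontrivial_inv hφ1
  rw [sum_comp_sq_s3 hφ hφ1 fun t ↦ φ (1 - t)]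
  simp only [add_mul, one_mul, Finset.sum_add_distrib, sum_mulChar_one_sub hφ1, hJ, zero_add]

end QuadraticCharacter

section JacobiSum

variable {F R : Type*} [Field F] [Fintype F] [CommRing R]

theorem sum_mul_one_sub_mul (χ ω : MulChar F R) {z : F} (hz : z ≠ 0) :
    ∑ t, χ t * ω (1 - z * t) = χ⁻¹ z * jacobiSum χ ω := by
  rw [jacobiSum, Finset.mul_sum, ← Equiv.sum_comp (Equiv.mulLeft₀ z⁻¹ (inv_ne_zero hz))]
  refine Finset.sum_congr rfl fun t _ ↦ ?_
  simp only [Equiv.mulLeft₀_apply, mul_inv_cancel_left₀ hz, map_mul, MulChar.inv_apply', mul_assoc]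

theorem sum_sq_mul_quadratic_one_sub_mul_sq {φ : MulChar F R} (hφ : φ.IsQuadratic)
    (hφ1 : φ ≠ 1) (χ : MulChar F R) {z : F} (hz : z ≠ 0) :
    ∑ w, (χ ^ 2) w * φ (1 - z * w ^ 2) =
      χ⁻¹ z * jacobiSum χ φ + (χ * φ)⁻¹ z * jacobiSum (χ * φ) φ := by
  simp only [MulChar.pow_apply' χ two_ne_zero, ← map_pow]
  rw [sum_comp_sq_s3 hφ hφ1 fun t ↦ χ t * φ (1 - z * t), ← sum_mul_one_sub_mul χ φ hz,
    ← sum_mul_one_sub_mul (χ * φ) φ hz, ← Finset.sum_add_distrib]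
  refine Finset.sum_congr rfl fun t _ ↦ ?_
  rw [MulChar.mul_apply]
  ring

theorem jacobiSum_eq_mul_jacobiSum_inv (χ ω : MulChar F R) :
    jacobiSum χ ω = χ (-1) * jacobiSum χ (χ * ω)⁻¹ := by
  rw [jacobiSum_comm χ ω, jacobiSum_comm χ, jacobiSum, jacobiSum, Finset.mul_sum,
    ← Equiv.sum_comp (Equiv.inv F)]
  refine Finset.sum_congr rfl fun v _ ↦ ?_
  rcases eq_or_ne v 0 with rfl | hv
  · simp [MulChar.map_zero]
  · have hv' : 1 - v⁻¹ = -1 * v⁻¹ * (1 - v) := by field_simp; ring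
    simp only [Equiv.inv_apply, hv', map_mul, mul_inv, MulChar.mul_apply, MulChar.inv_apply']
    ring

theorem apply_four_mul_jacobiSum_self [IsDomain R] {φ χ : MulChar F R} (hφ : φ.IsQuadratic)
    (hφ1 : φ ≠ 1) (hχ : χ ≠ 1) : χ 4 * jacobiSum χ χ = jacobiSum χ φ := by
  have two_ne : (2 : F) ≠ 0 := Ring.two_ne_zero (ringChar_ne_two_of_isQuadratic hφ hφ1)
  -- `4 t (1 - t) = 1 - w ^ 2` for `w = 1 - 2 t`
  have self_eq : χ 4 * jacobiSum χ χ = ∑ w, χ (1 - w ^ 2) := by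
    rw [jacobiSum, Finset.mul_sum,
      ← ((Equiv.mulLeft₀ 2 two_ne).trans (Equiv.subLeft 1)).sum_comp fun w ↦ χ (1 - w ^ 2)]
    refine Finset.sum_congr rfl fun t _ ↦ ?_
    rw [← map_mul, ← map_mul, Equiv.trans_apply, Equiv.mulLeft₀_apply, Equiv.subLeft_apply]
    ring_nf
  rw [self_eq, sum_comp_sq_s3 hφ hφ1 fun t ↦ χ (1 - t), jacobiSum_comm, jacobiSum]
  simp only [add_mul, one_mul, Finset.sum_add_distrib, sum_mulChar_one_sub hχ, zero_add]

end JacobiSum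

section GaussSum

variable {F k : Type*} [Field F] [Fintype F] [Field k] {φ : MulChar F k} {ψ : AddChar F k}

theorem gaussSum_ne_zero (hq : (Fintype.card F : k) ≠ 0) (hψ : ψ.IsPrimitive)
    (χ : MulChar F k) : gaussSum χ ψ ≠ 0 := by
  rcases eq_or_ne χ 1 with rfl | hχ
  · have hψ1 : ψ ≠ 1 := by simpa [AddChar.mulShift_one] using hψ one_ne_zero
    simp [gaussSum_one_left hψ1]
  · exact gaussSum_ne_zero_of_nontrivial hq hχ hψ

theorem gaussSum_mul_gaussSum_inv {χ : MulChar F k} (hχ : χ ≠ 1) (hψ : ψ.IsPrimitive) :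
    gaussSum χ ψ * gaussSum χ⁻¹ ψ = χ (-1) * Fintype.card F := by
  rw [← gaussSum_mul_gaussSum_eq_card hχ hψ, ← mul_gaussSum_inv_eq_gaussSum χ⁻¹ ψ,
    MulChar.inv_apply', inv_neg_one]
  ring

/-- The Hasse–Davenport product formula for the quadratic character. -/
theorem gaussSum_duplication (hφ : φ.IsQuadratic) (hφ1 : φ ≠ 1)
    (hq : (Fintype.card F : k) ≠ 0) (hψ : ψ.IsPrimitive) (χ : MulChar F k) :
    χ 4 * (gaussSum χ ψ * gaussSum (χ * φ) ψ) = gaussSum (χ ^ 2) ψ * gaussSum φ ψ := by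
  by_cases hχ : χ ^ 2 = 1
  · have hχ4 : χ 4 = 1 := map_eq_one_of_isQuadratic_of_isSquare
      (MulChar.isQuadratic_iff_sq_eq_one.mpr hχ)
      (isUnit_four_of_ringChar_ne_two (ringChar_ne_two_of_isQuadratic hφ hφ1)) ⟨2, by norm_num⟩
    rw [hχ4, hχ]
    rcases eq_one_or_eq_of_sq_eq_one hφ hφ1 hχ with rfl | rfl
    · simp
    · simp [← sq, hφ.sq_eq_one, mul_comm]
  · have hχ1 : χ ≠ 1 := by rintro rfl; simp at hχ
    have hJ := jacobiSum_mul_nontrivial (mul_ne_one_of_sq_ne_one hφ hχ) ψ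
    have hJ_self := jacobiSum_mul_nontrivial (sq χ ▸ hχ) ψ
    rw [← sq] at hJ_self
    rw [← apply_four_mul_jacobiSum_self hφ hφ1 hχ1] at hJ
    apply mul_left_cancel₀ (gaussSum_ne_zero hq hψ χ)
    linear_combination (-χ 4 * gaussSum (χ * φ) ψ) * hJ_self + gaussSum (χ ^ 2) ψ * hJ

theorem jacobiSum_duplication (hφ : φ.IsQuadratic) (hφ1 : φ ≠ 1)
    (hq : (Fintype.card F : k) ≠ 0) (hψ : ψ.IsPrimitive) {χ ω : MulChar F k}
    (hω : φ * ω ≠ 1) (hχω : (χ * ω) ^ 2 ≠ 1) :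
    jacobiSum (χ ^ 2) (ω ^ 2) * jacobiSum φ ω = jacobiSum χ ω * jacobiSum (χ * φ) ω := by
  have hχω1 : χ * ω ≠ 1 := by intro h; simp [h] at hχω
  have hχφω : χ * φ * ω ≠ 1 := by
    rw [mul_right_comm]; exact mul_ne_one_of_sq_ne_one hφ hχω
  have four_ne (α : MulChar F k) : α 4 ≠ 0 :=
    ((isUnit_four_of_ringChar_ne_two (ringChar_ne_two_of_isQuadratic hφ hφ1)).map α).ne_zero
  have g_ne := gaussSum_ne_zero hq hψ
  have sq_eq (α : MulChar F k) : gaussSum (α ^ 2) ψ =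
      α 4 * (gaussSum α ψ * gaussSum (α * φ) ψ) / gaussSum φ ψ :=
    eq_div_of_mul_eq (g_ne φ) (gaussSum_duplication hφ hφ1 hq hψ α).symm
  rw [jacobiSum_eq_gaussSum_mul_gaussSum_div_gaussSum hq (mul_pow χ ω 2 ▸ hχω) hψ,
    jacobiSum_eq_gaussSum_mul_gaussSum_div_gaussSum hq hω hψ,
    jacobiSum_eq_gaussSum_mul_gaussSum_div_gaussSum hq hχω1 hψ,
    jacobiSum_eq_gaussSum_mul_gaussSum_div_gaussSum hq hχφω hψ,
    ← mul_pow, sq_eq, sq_eq, sq_eq, MulChar.mul_apply, mul_right_comm χ φ, mul_comm φ ω]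
  field_simp [g_ne, four_ne]

theorem jacobiSum_quadratic_mul_jacobiSum_quadratic (hφ : φ.IsQuadratic) (hφ1 : φ ≠ 1)
    (hq : (Fintype.card F : k) ≠ 0) (hψ : ψ.IsPrimitive) {χ ω : MulChar F k}
    (hχ : χ * φ ≠ 1) (hω : φ * ω ≠ 1) (hχω : (χ * ω) ^ 2 ≠ 1) :
    jacobiSum χ φ * jacobiSum (χ * ω) φ =
      jacobiSum (χ ^ 2) (ω ^ 2) / jacobiSum φ ω * jacobiSum (χ * ω) (φ * χ⁻¹) ^ 2 := by
  have hχω1 : χ * ω ≠ 1 := by intro h; simp [h] at hχω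
  have hχωφ : χ * ω * φ ≠ 1 := mul_ne_one_of_sq_ne_one hφ hχω
  have hprod : χ * ω * (φ * χ⁻¹) = φ * ω := by
    rw [mul_comm φ, mul_mul_mul_comm, ← mul_assoc]; simp [mul_comm]
  have g_ne := gaussSum_ne_zero hq hψ
  have reflection : (gaussSum (χ * φ) ψ * gaussSum (φ * χ⁻¹) ψ) ^ 2 = (gaussSum φ ψ ^ 2) ^ 2 := by
    have hinv : (χ * φ)⁻¹ = φ * χ⁻¹ := by rw [mul_inv_rev, hφ.inv]
    have hχ_neg_one : χ (-1) ^ 2 = 1 := by rw [← map_pow]; simp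
    rw [← hinv, gaussSum_mul_gaussSum_inv hχ hψ, gaussSum_sq hφ1 hφ hψ, MulChar.mul_apply]
    linear_combination (φ (-1) * Fintype.card F) ^ 2 * hχ_neg_one
  have hJ := jacobiSum_eq_gaussSum_mul_gaussSum_div_gaussSum hq hω hψ
  have hJ_ne : jacobiSum φ ω ≠ 0 := by simp [hJ, g_ne]
  rw [eq_div_of_mul_eq hJ_ne (jacobiSum_duplication hφ hφ1 hq hψ hω hχω), hJ,
    jacobiSum_eq_gaussSum_mul_gaussSum_div_gaussSum hq hχ hψ,
    jacobiSum_eq_gaussSum_mul_gaussSum_div_gaussSum hq hχωφ hψ,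
    jacobiSum_eq_gaussSum_mul_gaussSum_div_gaussSum hq hχω1 hψ,
    jacobiSum_eq_gaussSum_mul_gaussSum_div_gaussSum hq (mul_right_comm χ ω φ ▸ hχωφ) hψ,
    jacobiSum_eq_gaussSum_mul_gaussSum_div_gaussSum hq (hprod ▸ hω) hψ, hprod,
    mul_right_comm χ φ ω]
  field_simp [g_ne]
  linear_combination -reflection

theorem jacobiSum_quadratic_mul_jacobiSum_quadratic_of_sq_eq_mul (hφ : φ.IsQuadratic)
    (hφ1 : φ ≠ 1) (hq : (Fintype.card F : k) ≠ 0) (hψ : ψ.IsPrimitive) {η K T : MulChar F k}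
    (hK : φ * K⁻¹ ≠ 1) (hηK : η * K ≠ 1) (hηK' : η * K⁻¹ ≠ 1) (hT : T ^ 2 = η * K) :
    jacobiSum T φ * jacobiSum (T * K⁻¹) φ =
      jacobiSum (η * K) (η⁻¹ * K) / jacobiSum φ K⁻¹ * jacobiSum (T * K⁻¹) (φ * T⁻¹) ^ 2 := by
  have hTK : (T * K⁻¹) ^ 2 = η * K⁻¹ := by rw [mul_pow, hT, sq, mul_assoc, mul_inv_cancel_left]
  have hηK_neg_one : (η * K) (-1) = 1 := by
    rw [← hT, MulChar.pow_apply' T two_ne_zero, ← map_pow, neg_one_sq, map_one]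
  have hinv : (η * K * (η⁻¹ * K))⁻¹ = K⁻¹ ^ 2 := by
    rw [mul_mul_mul_comm, mul_inv_cancel, one_mul, ← sq, inv_pow]
  rw [jacobiSum_eq_mul_jacobiSum_inv (η * K), hηK_neg_one, one_mul, hinv, ← hT]
  exact jacobiSum_quadratic_mul_jacobiSum_quadratic hφ hφ1 hq hψ
    (mul_ne_one_of_sq_ne_one hφ (hT ▸ hηK)) hK (hTK ▸ hηK')

end GaussSum

section PeriodSum

variable {F R : Type*} [Field F] [Fintype F] [CommRing R] [IsDomain R] {φ : MulChar F R}

theorem sum_sum_inv_mul_mul {χ : MulChar F R} (hχ : χ ≠ 1) (f : F → F → R) :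
    ∑ x, ∑ y, χ⁻¹ x * χ y * f x y = ∑ z, χ z * ∑ x, f x (z * x) := by
  simp only [Finset.mul_sum]
  rw [Finset.sum_comm (γ := F) (f := fun z x ↦ χ z * f x (z * x))]
  refine Finset.sum_congr rfl fun x _ ↦ ?_
  rcases eq_or_ne x 0 with rfl | hx
  · simp [MulChar.map_zero, ← Finset.sum_mul, MulChar.sum_eq_zero_of_ne_one hχ]
  · rw [← Equiv.sum_comp (Equiv.mulRight₀ x hx)]
    refine Finset.sum_congr rfl fun z _ ↦ ?_
    simp only [Equiv.mulRight₀_apply, MulChar.inv_apply', ← map_mul, mul_comm z x,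
      inv_mul_cancel_left₀ hx]

theorem sum_erase_inv_comp_involution {M : Type*} [AddCommMonoid M] [DecidableEq F] {z : F}
    (hz : z ≠ 0) (hz1 : z ≠ 1) (f : F → M) :
    ∑ x ∈ Finset.univ.erase z⁻¹, f ((1 - x) / (1 - z * x)) =
      ∑ w ∈ Finset.univ.erase z⁻¹, f w := by
  have hz1' : 1 - z ≠ 0 := sub_ne_zero.mpr hz1.symm
  have denom_ne {x : F} (hx : x ≠ z⁻¹) : 1 - z * x ≠ 0 :=
    sub_ne_zero.mpr fun h ↦ hx (eq_inv_of_mul_eq_one_right h.symm)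
  have maps_to (x : F) (hx : x ∈ Finset.univ.erase z⁻¹) :
      (1 - x) / (1 - z * x) ∈ Finset.univ.erase z⁻¹ := by
    simp only [Finset.mem_erase, Finset.mem_univ, and_true] at hx ⊢
    rw [Ne, div_eq_iff (denom_ne hx), eq_inv_mul_iff_mul_eq₀ hz]
    intro h
    exact hz1 (by linear_combination h)
  have involutive (x : F) (hx : x ∈ Finset.univ.erase z⁻¹) :
      (1 - (1 - x) / (1 - z * x)) / (1 - z * ((1 - x) / (1 - z * x))) = x := by
    have hx' := denom_ne (Finset.ne_of_mem_erase hx)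
    have num_eq : 1 - (1 - x) / (1 - z * x) = x * (1 - z) / (1 - z * x) := by
      rw [one_sub_div hx']; ring
    have denom_eq : 1 - z * ((1 - x) / (1 - z * x)) = (1 - z) / (1 - z * x) := by
      rw [← mul_div_assoc, one_sub_div hx']; ring
    rw [num_eq, denom_eq, div_div_div_cancel_right₀ hx', mul_div_cancel_right₀ x hz1']
  exact Finset.sum_nbij' _ _ maps_to maps_to involutive involutive fun _ _ ↦ rfl

theorem sum_one_sub_mul_quadratic_one_sub_mul_sq (hφ : φ.IsQuadratic) (hφ1 : φ ≠ 1)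
    (χ : MulChar F R) {z : F} (hz : z ≠ 0) :
    ∑ x, χ (1 - x) * χ⁻¹ (1 - z * x) * φ (1 - z * x ^ 2) =
      φ (1 - z) * ∑ w, χ w * φ (1 - z * w ^ 2) - χ⁻¹ z * φ (-z) := by
  classical
  rcases eq_or_ne z 1 with rfl | hz1
  · have term (x : F) : χ (1 - x) * χ⁻¹ (1 - 1 * x) * φ (1 - 1 * x ^ 2) = φ (1 - x ^ 2) := by
      rcases eq_or_ne x 1 with rfl | hx
      · simp [MulChar.map_zero]
      · have hx' : IsUnit (1 - x) := (sub_ne_zero.mpr hx.symm).isUnit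
        rw [one_mul, one_mul, ← MulChar.mul_apply, mul_inv_cancel, MulChar.one_apply hx', one_mul]
    simp only [term, sum_quadratic_one_sub_sq hφ hφ1]
    simp [MulChar.map_zero]
  have hz1' : 1 - z ≠ 0 := sub_ne_zero.mpr hz1.symm
  have term (x : F) (hx : x ∈ Finset.univ.erase z⁻¹) :
      χ (1 - x) * χ⁻¹ (1 - z * x) * φ (1 - z * x ^ 2) =
        φ (1 - z) * (χ ((1 - x) / (1 - z * x)) * φ (1 - z * ((1 - x) / (1 - z * x)) ^ 2)) := by
    have hx' : 1 - z * x ≠ 0 := sub_ne_zero.mpr fun h ↦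
      Finset.ne_of_mem_erase hx (eq_inv_of_mul_eq_one_right h.symm)
    have hsq : (1 - z) * (1 - z * ((1 - x) / (1 - z * x)) ^ 2) =
        (1 - z * x ^ 2) * ((1 - z) / (1 - z * x)) ^ 2 := by field_simp; ring
    rw [mul_left_comm, ← map_mul φ, hsq,
      map_mul_sq_of_isQuadratic hφ _ (div_ne_zero hz1' hx').isUnit, MulChar.inv_apply',
      ← map_mul χ, ← div_eq_mul_inv]
  have pole : φ (1 - z) * φ (1 - z * z⁻¹ ^ 2) = φ (-z) := by
    have hsq : (1 - z) * (1 - z * z⁻¹ ^ 2) = -z * ((1 - z) / z) ^ 2 := by field_simp; ring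
    rw [← map_mul, hsq, map_mul_sq_of_isQuadratic hφ _ (div_ne_zero hz1' hz).isUnit]
  rw [← Finset.sum_erase Finset.univ (a := z⁻¹) (by simp [hz, MulChar.map_zero]),
    Finset.sum_congr rfl term,
    sum_erase_inv_comp_involution hz hz1 fun w ↦ φ (1 - z) * (χ w * φ (1 - z * w ^ 2)),
    ← Finset.mul_sum, Finset.sum_erase_eq_sub (Finset.mem_univ _), MulChar.inv_apply' χ, ← pole]
  ring

theorem sum_sum_eq_sum_quadratic (hφ : φ.IsQuadratic) (hφ1 : φ ≠ 1) {χ ω : MulChar F R}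
    (hχ : χ ≠ 1) (hχω : χ * ω⁻¹ * φ ≠ 1) :
    ∑ x, ∑ y, χ⁻¹ x * χ y * (ω (1 - x) * ω⁻¹ (1 - y) * φ (1 - x * y)) =
      ∑ z, χ z * φ (1 - z) * ∑ w, ω w * φ (1 - z * w ^ 2) := by
  have term (z : F) :
      χ z * ∑ x, ω (1 - x) * ω⁻¹ (1 - z * x) * φ (1 - x * (z * x)) =
        χ z * φ (1 - z) * (∑ w, ω w * φ (1 - z * w ^ 2)) - φ (-1) * (χ * ω⁻¹ * φ) z := by
    rcases eq_or_ne z 0 with rfl | hz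
    · simp [MulChar.map_zero]
    · have hcomm (x : F) : x * (z * x) = z * x ^ 2 := by ring
      simp only [hcomm, sum_one_sub_mul_quadratic_one_sub_mul_sq hφ hφ1 ω hz, ← neg_one_mul z,
        map_mul, MulChar.mul_apply]
      ring
  rw [sum_sum_inv_mul_mul hχ]
  simp only [term, Finset.sum_sub_distrib, ← Finset.mul_sum,
    MulChar.sum_eq_zero_of_ne_one hχω, mul_zero, sub_zero]

theorem sum_sum_eq_jacobiSum_mul_jacobiSum_add (hφ : φ.IsQuadratic) (hφ1 : φ ≠ 1)
    {χ ω : MulChar F R} (hχ : χ ≠ 1) (hχω : χ * (ω ^ 2)⁻¹ * φ ≠ 1) :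
    ∑ x, ∑ y, χ⁻¹ x * χ y * ((ω ^ 2) (1 - x) * (ω ^ 2)⁻¹ (1 - y) * φ (1 - x * y)) =
      jacobiSum (χ * ω⁻¹) φ * jacobiSum ω φ +
        jacobiSum (χ * (ω * φ)⁻¹) φ * jacobiSum (ω * φ) φ := by
  rw [sum_sum_eq_sum_quadratic hφ hφ1 hχ hχω, jacobiSum, jacobiSum.eq_def (χ * (ω * φ)⁻¹),
    Finset.sum_mul, Finset.sum_mul, ← Finset.sum_add_distrib]
  refine Finset.sum_congr rfl fun z _ ↦ ?_
  rcases eq_or_ne z 0 with rfl | hz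
  · simp [MulChar.map_zero]
  · rw [sum_sq_mul_quadratic_one_sub_mul_sq hφ hφ1 ω hz, MulChar.mul_apply, MulChar.mul_apply]
    ring

end PeriodSum

theorem isQuadratic_quadChar (F : Type*) [Field F] [Fintype F] [DecidableEq F] :
    (quadChar F).IsQuadratic :=
  (quadraticChar_isQuadratic F).comp _

theorem quadChar_ne_one_s3 {F : Type*} [Field F] [Fintype F] [DecidableEq F] (hodd : ringChar F ≠ 2) :
    quadChar F ≠ 1 :=
  (MulChar.ringHomComp_ne_one_iff Int.cast_injective).mpr (quadraticChar_ne_one hodd)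

theorem periodP_eq_sum_sum {F : Type*} [Field F] [Fintype F] (A η K : MulChar F ℂ) :
    periodP A [(η, K), (η⁻¹, K⁻¹)] 1 = ∑ x, ∑ y, η⁻¹ x * η y *
      ((η * K⁻¹) (1 - x) * (η * K⁻¹)⁻¹ (1 - y) * A⁻¹ (1 - x * y)) := by
  simp only [periodP, periodPAux, List.reverse_cons, List.reverse_nil, List.nil_append,
    List.cons_append, Finset.mul_sum, inv_inv, mul_inv, one_mul]
  refine Finset.sum_congr rfl fun x _ ↦ Finset.sum_congr rfl fun y _ ↦ ?_
  ring

/-- The Evans–Greene evaluation of `₃ℙ₂(φ,η,η̄;K,K̄;1)` when `ηK = S²` is a square. -/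
theorem statement3 {F : Type*} [Field F] [Fintype F] [DecidableEq F]
    (hodd : ringChar F ≠ 2) (η K S : MulChar F ℂ)
    (hη : η ≠ 1) (hKφ : K * quadChar F ≠ 1) (hηK : η * K ≠ 1) (hηK' : η * K⁻¹ ≠ 1)
    (hS : η * K = S ^ 2) :
    periodP (quadChar F) [(η, K), (η⁻¹, K⁻¹)] 1
      = jacobiSum (η * K) (η⁻¹ * K) / jacobiSum (quadChar F) K⁻¹
          * (jacobiSum (S * K⁻¹) (quadChar F * S⁻¹) ^ 2
              + jacobiSum (quadChar F * S * K⁻¹) S⁻¹ ^ 2) := by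
  set φ := quadChar F
  have hφ : φ.IsQuadratic := isQuadratic_quadChar F
  have hφ1 : φ ≠ 1 := quadChar_ne_one_s3 hodd
  have hφK : φ * K⁻¹ ≠ 1 := fun h ↦ hKφ <| by
    rw [← mul_inv_eq_one.mp h, ← sq, hφ.sq_eq_one]
  have hη_eq : η = S ^ 2 * K⁻¹ := eq_mul_inv_of_mul_eq hS
  have hSK : η * K⁻¹ = (S * K⁻¹) ^ 2 := by rw [hη_eq, mul_pow, sq K⁻¹, mul_assoc]
  have hKφ' : η * ((S * K⁻¹) ^ 2)⁻¹ * φ ≠ 1 := by simpa [← hSK] using hKφ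
  have hφS : (φ * S) ^ 2 = η * K := by rw [mul_pow, hφ.sq_eq_one, one_mul, hS]
  have hη_div : η * (S * K⁻¹)⁻¹ = S := by rw [hη_eq]; group
  have hη_div' : η * (S * K⁻¹ * φ)⁻¹ = φ * S := by
    rw [mul_inv_rev, hφ.inv, mul_left_comm, hη_div]
  have hφS_inv : φ * (φ * S)⁻¹ = S⁻¹ := by rw [mul_inv_rev, mul_comm, inv_mul_cancel_right]
  have hprod {T : MulChar F ℂ} := jacobiSum_quadratic_mul_jacobiSum_quadratic_of_sq_eq_mul
    (T := T) hφ hφ1 (Nat.cast_ne_zero.mpr Fintype.card_ne_zero)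
    (AddChar.FiniteField.primitiveChar_to_Complex_isPrimitive F) hφK hηK hηK'
  rw [periodP_eq_sum_sum, hφ.inv, hSK, sum_sum_eq_jacobiSum_mul_jacobiSum_add hφ hφ1 hη hKφ',
    hη_div, hη_div', mul_comm (S * K⁻¹) φ, ← mul_assoc, hprod hS.symm, hprod hφS, hφS_inv,
    mul_add]
end

section
/- Let 𝔽_q be a finite field of odd characteristic and let A, B, C, D, E be multiplicative characters of 𝔽_q^×. Then ₆ℙ₅(A, B, C, A, D, E; AD̄, AĒ, ε, AB̄, AC̄; 1; q) = (BCDE)(−1) · ∑_{t ∈ 𝔽_q} A(t) · ( ₃ℙ₂(A, B, C; AD̄, AĒ; t; q) )², and this also equals (BCDE)(−1) · ∑_{t ∈ 𝔽_q} A(t) · ( ₃ℙ₂(A, D, E; AB̄, AC̄; t; q) )². -/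
/-!
Splitting a period at a parameter pair `(A, ε)` turns it into a multiplicative convolution
`λ ↦ A(-1) ∑ₜ P(1/t) P'(λt)` of two shorter periods: by `A(z) Ā(1-z) = A(-1) Ā(1-1/z)`, the kernel
at the split is the kernel `₁ℙ₀(A; 1/z)` that starts the second period. Substituting `x ↦ 1/x` in
every integration variable shows that inverting the argument of a well-poised period exchanges the
numerator parameter in each pair with the one hidden in the denominator, up to a sign and the
factor `A(t)`. After this exchange the two factors of the convolution are the same period.
-/

section MulChar

variable {F R : Type*} [Field F] [CommMonoidWithZero R]

lemma mulChar_inv_apply_neg_one (χ : MulChar F R) : χ⁻¹ (-1) = χ (-1) := by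
  rw [MulChar.inv_apply', inv_neg_one]

lemma mulChar_neg_one_mul_self (χ : MulChar F R) : χ (-1) * χ (-1) = 1 := by
  rw [← map_mul, neg_one_mul, neg_neg, map_one]

lemma mulChar_inv_apply_mul_apply (χ : MulChar F R) {x : F} (hx : x ≠ 0) : χ⁻¹ x * χ x = 1 := by
  rw [← MulChar.mul_apply, inv_mul_cancel, MulChar.one_apply hx.isUnit]

lemma mulChar_one_sub_inv (χ : MulChar F R) {x : F} (hx : x ≠ 0) :
    χ (1 - x⁻¹) = χ (-1) * χ⁻¹ x * χ (1 - x) := by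
  have h : 1 - x⁻¹ = -1 * x⁻¹ * (1 - x) := by field_simp; ring
  rw [h, map_mul, map_mul, MulChar.inv_apply']

lemma mulChar_mul_inv_one_sub (χ : MulChar F R) {x : F} (hx : x ≠ 0) :
    χ x * χ⁻¹ (1 - x) = χ (-1) * χ⁻¹ (1 - x⁻¹) := by
  rw [mulChar_one_sub_inv χ⁻¹ hx, mulChar_inv_apply_neg_one, inv_inv, ← mul_assoc, ← mul_assoc,
    mulChar_neg_one_mul_self, one_mul]

lemma mulChar_inv_mul_one_sub_inv (χ ψ : MulChar F R) {x : F} (hx : x ≠ 0) :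
    χ x⁻¹ * ψ (1 - x⁻¹) = ψ (-1) * (χ * ψ)⁻¹ x * ψ (1 - x) := by
  rw [mulChar_one_sub_inv ψ hx, ← MulChar.inv_apply', mul_inv, MulChar.mul_apply χ⁻¹]
  ac_rfl

lemma mulChar_wellPoised_weight_inv (A B D : MulChar F R) {x : F} (hx : x ≠ 0) :
    B x⁻¹ * (B⁻¹ * (A * D⁻¹)) (1 - x⁻¹)
      = (A * B * D) (-1) * A⁻¹ x * (D x * (D⁻¹ * (A * B⁻¹)) (1 - x)) := by
  have sign : (B⁻¹ * (A * D⁻¹)) (-1) = (A * B * D) (-1) := by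
    simp only [MulChar.mul_apply, mulChar_inv_apply_neg_one]
    ac_rfl
  have exponent : (B * (B⁻¹ * (A * D⁻¹)))⁻¹ = A⁻¹ * D := by
    rw [mul_inv_cancel_left, mul_inv, inv_inv]
  have swap : B⁻¹ * (A * D⁻¹) = D⁻¹ * (A * B⁻¹) := by ac_rfl
  rw [mulChar_inv_mul_one_sub_inv B _ hx, sign, exponent, swap, MulChar.mul_apply A⁻¹ D]
  ac_rfl

lemma mulChar_wellPoised_sign_pair (A B C D E : MulChar F R) :
    (A * B * D * (A * C * E)) (-1) = (B * C * D * E) (-1) := by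
  have factor : A * B * D * (A * C * E) = A * A * (B * C * D * E) := by ac_rfl
  rw [factor, MulChar.mul_apply (A * A), MulChar.mul_apply A, mulChar_neg_one_mul_self, one_mul]

lemma sum_mulChar_one_mul_comp_mul_left {F R : Type*} [Field F] [Fintype F] [CommSemiring R]
    {x : F} (hx : x ≠ 0) (f : F → R) :
    ∑ t : F, (1 : MulChar F R) t * f (x * t) = ∑ t : F, (1 : MulChar F R) t * f t := by
  refine Fintype.sum_equiv (Equiv.mulLeft₀ x hx) _ _ fun t => ?_
  rw [Equiv.mulLeft₀_apply, map_mul, MulChar.one_apply hx.isUnit, one_mul]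

end MulChar

section Period

variable {F : Type*} [Field F] [Fintype F]

lemma periodPAux_perm (A : MulChar F ℂ) {l l' : List (MulChar F ℂ × MulChar F ℂ)}
    (h : l.Perm l') (lam : F) : periodPAux A l lam = periodPAux A l' lam := by
  induction h generalizing lam with
  | nil => rfl
  | cons p _ ih => simp only [periodPAux, ih]
  | swap p q l =>
    simp only [periodPAux, Finset.mul_sum]
    rw [Finset.sum_comm]
    refine Finset.sum_congr rfl fun x _ => Finset.sum_congr rfl fun y _ => ?_
    rw [mul_right_comm lam y x]
    ring
  | trans _ _ ih ih' => rw [ih, ih']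

lemma periodP_perm (A : MulChar F ℂ) {l l' : List (MulChar F ℂ × MulChar F ℂ)}
    (h : l.Perm l') (lam : F) : periodP A l lam = periodP A l' lam :=
  periodPAux_perm A ((l.reverse_perm.trans h).trans l'.reverse_perm.symm) lam

lemma periodP_nil (A : MulChar F ℂ) (lam : F) : periodP A [] lam = A⁻¹ (1 - lam) := rfl

lemma periodP_cons (A : MulChar F ℂ) (p : MulChar F ℂ × MulChar F ℂ)
    (l : List (MulChar F ℂ × MulChar F ℂ)) (lam : F) :
    periodP A (p :: l) lam
      = ∑ x : F, p.1 x * (p.1⁻¹ * p.2) (1 - x) * periodP A l (lam * x) := by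
  have h : (p :: l).reverse.Perm (p :: l.reverse) :=
    (p :: l).reverse_perm.trans (l.reverse_perm.symm.cons p)
  exact periodPAux_perm A h lam

/-- The factor `ε(t)` removes the term `t = 0`, where `t⁻¹` is a junk value. -/
lemma periodP_append_cons_one (A : MulChar F ℂ) (l l' : List (MulChar F ℂ × MulChar F ℂ))
    (lam : F) :
    periodP A (l ++ (A, 1) :: l') lam
      = A (-1) * ∑ t : F, (1 : MulChar F ℂ) t * (periodP A l t⁻¹ * periodP A l' (lam * t)) := by
  induction l generalizing lam with
  | nil =>
    rw [List.nil_append, periodP_cons, Finset.mul_sum]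
    refine Finset.sum_congr rfl fun t _ => ?_
    obtain rfl | ht := eq_or_ne t 0
    · simp only [MulChar.map_zero, zero_mul, mul_zero]
    rw [periodP_nil, mul_one, mulChar_mul_inv_one_sub A ht, MulChar.one_apply ht.isUnit, one_mul,
      mul_assoc]
  | cons p l ih =>
    have rescale {x : F} (hx : x ≠ 0) :
        ∑ t : F, (1 : MulChar F ℂ) t * (periodP A l t⁻¹ * periodP A l' (lam * x * t))
          = ∑ t : F, (1 : MulChar F ℂ) t * (periodP A l (t⁻¹ * x) * periodP A l' (lam * t)) := by
      simpa only [mul_inv_rev, inv_mul_cancel_right₀ hx, ← mul_assoc lam] using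
        sum_mulChar_one_mul_comp_mul_left hx
          fun t => periodP A l (t⁻¹ * x) * periodP A l' (lam * t)
    have weight (x : F) : p.1 x * (p.1⁻¹ * p.2) (1 - x) * periodP A (l ++ (A, 1) :: l') (lam * x)
        = ∑ t : F, p.1 x * (p.1⁻¹ * p.2) (1 - x) * (A (-1)
            * ((1 : MulChar F ℂ) t * (periodP A l (t⁻¹ * x) * periodP A l' (lam * t)))) := by
      obtain rfl | hx := eq_or_ne x 0
      · simp only [MulChar.map_zero, zero_mul, Finset.sum_const_zero]
      rw [ih, rescale hx, Finset.mul_sum, Finset.mul_sum]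
    rw [List.cons_append, periodP_cons, Finset.sum_congr rfl fun x _ => weight x, Finset.sum_comm,
      Finset.mul_sum]
    refine Finset.sum_congr rfl fun t _ => ?_
    rw [periodP_cons, Finset.sum_mul, Finset.mul_sum, Finset.mul_sum]
    refine Finset.sum_congr rfl fun x _ => ?_
    ring

/-- The parameter pairs `(B, A D⁻¹)` attached to the pairs `(B, D)`. Together with the leading
parameter `A` they form a well-poised parameter set, in which replacing every `(B, D)` by `(D, B)`
corresponds to inverting the argument. -/
noncomputable def wellPoised (A : MulChar F ℂ) (l : List (MulChar F ℂ × MulChar F ℂ)) :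
    List (MulChar F ℂ × MulChar F ℂ) :=
  l.map fun p => (p.1, A * p.2⁻¹)

lemma periodP_wellPoised_inv (A : MulChar F ℂ) (l : List (MulChar F ℂ × MulChar F ℂ)) {t : F}
    (ht : t ≠ 0) :
    periodP A (wellPoised A l) t⁻¹
      = A (-1) * (l.map fun p => A * p.1 * p.2).prod (-1)
          * (A t * periodP A (wellPoised A (l.map Prod.swap)) t) := by
  induction l generalizing t with
  | nil =>
    simp only [wellPoised, List.map_nil, List.prod_nil, periodP_nil,
      MulChar.one_apply isUnit_neg_one, mulChar_one_sub_inv A⁻¹ ht, mulChar_inv_apply_neg_one,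
      inv_inv]
    ring
  | cons p l ih =>
    obtain ⟨B, D⟩ := p
    simp only [wellPoised, List.map_cons, List.prod_cons, Prod.swap_prod_mk, periodP_cons,
      Finset.mul_sum] at ih ⊢
    rw [← Equiv.sum_comp (Equiv.inv F)]
    refine Finset.sum_congr rfl fun x _ => ?_
    obtain rfl | hx := eq_or_ne x 0
    · simp only [Equiv.inv_apply, inv_zero, MulChar.map_zero, zero_mul, mul_zero]
    rw [Equiv.inv_apply, mulChar_wellPoised_weight_inv A B D hx, ← mul_inv, ih (mul_ne_zero ht hx),
      map_mul A, MulChar.mul_apply (A * B * D)]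
    set P := periodP A ((l.map Prod.swap).map fun p => (p.1, A * p.2⁻¹)) (t * x)
    set σ := (l.map fun p => A * p.1 * p.2).prod (-1)
    linear_combination ((A * B * D) (-1) * D x * (D⁻¹ * (A * B⁻¹)) (1 - x) * A (-1) * σ * A t * P)
      * mulChar_inv_apply_mul_apply A hx

lemma periodP_wellPoised_append_swap (A : MulChar F ℂ) (l : List (MulChar F ℂ × MulChar F ℂ))
    (lam : F) :
    periodP A (wellPoised A l ++ (A, 1) :: wellPoised A (l.map Prod.swap)) lam
      = (l.map fun p => A * p.1 * p.2).prod (-1)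
          * ∑ t : F, A t * (periodP A (wellPoised A (l.map Prod.swap)) t
              * periodP A (wellPoised A (l.map Prod.swap)) (lam * t)) := by
  rw [periodP_append_cons_one, Finset.mul_sum, Finset.mul_sum]
  refine Finset.sum_congr rfl fun t _ => ?_
  obtain rfl | ht := eq_or_ne t 0
  · simp only [MulChar.map_zero, zero_mul, mul_zero]
  rw [periodP_wellPoised_inv A l ht, MulChar.one_apply ht.isUnit]
  set P := periodP A (wellPoised A (l.map Prod.swap))
  linear_combination ((l.map fun p => A * p.1 * p.2).prod (-1) * A t * P t * P (lam * t))
    * mulChar_neg_one_mul_self A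

end Period

theorem statement6_general {F : Type*} [Field F] [Fintype F] (A : MulChar F ℂ)
    (l : List (MulChar F ℂ × MulChar F ℂ)) (lam : F) :
    (periodP A (wellPoised A l ++ (A, 1) :: wellPoised A (l.map Prod.swap)) lam
        = (l.map fun p => A * p.1 * p.2).prod (-1)
            * ∑ t : F, A t * (periodP A (wellPoised A l) t * periodP A (wellPoised A l) (lam * t)))
    ∧ (periodP A (wellPoised A l ++ (A, 1) :: wellPoised A (l.map Prod.swap)) lam
        = (l.map fun p => A * p.1 * p.2).prod (-1)
            * ∑ t : F, A t * (periodP A (wellPoised A (l.map Prod.swap)) t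
                * periodP A (wellPoised A (l.map Prod.swap)) (lam * t))) := by
  refine ⟨?_, periodP_wellPoised_append_swap A l lam⟩
  have reorder : (wellPoised A l ++ (A, 1) :: wellPoised A (l.map Prod.swap)).Perm
      (wellPoised A (l.map Prod.swap) ++ (A, 1) :: wellPoised A l) :=
    List.perm_middle.trans ((List.perm_append_comm.cons _).trans List.perm_middle.symm)
  have h := periodP_wellPoised_append_swap A (l.map Prod.swap) lam
  simp only [List.map_map, Prod.swap_swap_eq, List.map_id] at h
  rw [periodP_perm A reorder, h]
  simp only [Function.comp_def, Prod.fst_swap, Prod.snd_swap, mul_right_comm A]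

/-- The well-poised `₆ℙ₅(A,B,C,A,D,E; AD̄,AĒ,ε,AB̄,AC̄; 1)` expressed as a weighted
sum of squares of `₃ℙ₂` values, in two ways. -/
theorem statement6 {F : Type*} [Field F] [Fintype F] (hodd : ringChar F ≠ 2)
    (A B C D E : MulChar F ℂ) :
    (periodP A [(B, A * D⁻¹), (C, A * E⁻¹), (A, 1), (D, A * B⁻¹), (E, A * C⁻¹)] 1
        = (B * C * D * E) (-1)
            * ∑ t : F, A t * periodP A [(B, A * D⁻¹), (C, A * E⁻¹)] t ^ 2)
    ∧ (periodP A [(B, A * D⁻¹), (C, A * E⁻¹), (A, 1), (D, A * B⁻¹), (E, A * C⁻¹)] 1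
        = (B * C * D * E) (-1)
            * ∑ t : F, A t * periodP A [(D, A * B⁻¹), (E, A * C⁻¹)] t ^ 2) := by
  simpa only [wellPoised, List.map_cons, List.map_nil, List.prod_cons, List.prod_nil, mul_one,
    Prod.swap_prod_mk, List.cons_append, List.nil_append, one_mul, ← sq,
    mulChar_wellPoised_sign_pair] using statement6_general A [(B, D), (C, E)] 1
end

section
/- Let 𝔽_q be a finite field of odd characteristic with quadratic character φ. Then ∑_{χ} χ(−1) · J(φχ, χ̄) = 0, where the sum runs over all multiplicative characters χ of 𝔽_q^×. (This is the key vanishing identity showing that the Beukers–Cohen–Mellit hypergeometric sum H_p({1/2,1/6,5/6},{1,4/3,2/3};1) vanishes at primes p ≡ 2 (mod 3).) -/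
/-! Expand each Jacobi sum and exchange the two summations: the inner sum over `χ` is that of
`χ (c t / (1 - t))`, so by orthogonality only the solution `t = 1 / (1 + c)` of `c t = 1 - t`
survives. Over `𝔽_q` this is Greene's finite-field analogue of the binomial theorem,
`∑_χ χ(c) J(Aχ, χ̄) = (q - 1) Ā(1 + c)` for `c ≠ 0`. At `c = -1` the equation has no solution and
the right-hand side is `Ā(0) = 0`, whatever the character `A`. -/

section Orthogonality

variable {M R : Type*} [CommMonoid M] [Finite M] [CommRing R] [IsDomain R]
  [HasEnoughRootsOfUnity R (Monoid.exponent Mˣ)] [Fintype (MulChar M R)]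

theorem sum_mulChar_apply_eq_zero {a : M} (ha : a ≠ 1) : ∑ χ : MulChar M R, χ a = 0 := by
  obtain ⟨ψ, hψ⟩ := MulChar.exists_apply_ne_one_of_hasEnoughRootsOfUnity M R ha
  have translate : ψ a * ∑ χ : MulChar M R, χ a = ∑ χ : MulChar M R, χ a := by
    simp only [Finset.mul_sum, ← MulChar.mul_apply]
    exact Equiv.sum_comp (Equiv.mulLeft ψ) fun χ ↦ χ a
  exact eq_zero_of_mul_eq_self_left hψ translate

theorem sum_mulChar_apply_eq_ite [DecidableEq M] (a : M) :
    ∑ χ : MulChar M R, χ a = if a = 1 then (Nat.card Mˣ : R) else 0 := by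
  split_ifs with ha
  · simp only [ha, map_one, Finset.sum_const, Finset.card_univ, nsmul_eq_mul, mul_one,
      ← Nat.card_eq_fintype_card, MulChar.card_eq_card_units_of_hasEnoughRootsOfUnity]
  · exact sum_mulChar_apply_eq_zero ha

end Orthogonality

section JacobiSum

open scoped Ring

variable {S R : Type*} [CommRing S]

theorem unit_mul_mul_inverse_one_sub_eq_one_iff (c : Sˣ) (t : S) :
    c * t * (1 - t)⁻¹ʳ = 1 ↔ (1 + c) * t = 1 := by
  constructor
  · intro h
    have hu : IsUnit (1 - t) := isUnit_ringInverse.1 (.of_mul_eq_one_right _ h)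
    have ht : 1 * (1 - t) = c * t := (Ring.eq_mul_inverse_iff_mul_eq _ _ _ hu).1 h.symm
    linear_combination -ht
  · intro h
    have ht : 1 - t = c * t := by linear_combination -h
    have hu : IsUnit (c * t) := c.isUnit.mul (.of_mul_eq_one_right _ h)
    rw [ht, Ring.mul_inverse_cancel _ hu]

variable [Fintype S] [CommRing R]

theorem sum_ite_mul_eq_one_apply_eq_inv_apply [DecidableEq S] (A : MulChar S R) (b : S) :
    ∑ t : S, (if b * t = 1 then A t else 0) = A⁻¹ b := by
  by_cases hb : IsUnit b
  · have inverse_unique (t : S) : b * t = 1 ↔ t = b⁻¹ʳ := by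
      rw [← mul_one b⁻¹ʳ, eq_comm (a := t), Ring.inverse_mul_eq_iff_eq_mul _ _ _ hb, eq_comm]
    simp only [inverse_unique, Finset.sum_ite_eq', Finset.mem_univ, if_true, MulChar.inv_apply]
  · have no_inverse (t : S) : b * t ≠ 1 := fun h ↦ hb (.of_mul_eq_one _ h)
    simp only [no_inverse, if_false, Finset.sum_const_zero, MulChar.map_nonunit _ hb]

theorem sum_mulChar_apply_mul_jacobiSum_eq_sum_mul_sum [Fintype (MulChar S R)]
    (A : MulChar S R) (c : S) :
    ∑ χ : MulChar S R, χ c * jacobiSum (A * χ) χ⁻¹ =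
      ∑ t : S, A t * ∑ χ : MulChar S R, χ (c * t * (1 - t)⁻¹ʳ) := by
  simp only [jacobiSum, Finset.mul_sum]
  rw [Finset.sum_comm]
  refine Finset.sum_congr rfl fun t _ ↦ Finset.sum_congr rfl fun χ _ ↦ ?_
  rw [MulChar.mul_apply, MulChar.inv_apply, map_mul, map_mul]
  ring

variable [IsDomain R] [HasEnoughRootsOfUnity R (Monoid.exponent Sˣ)] [Fintype (MulChar S R)]

theorem sum_mulChar_apply_unit_mul_jacobiSum (A : MulChar S R) (c : Sˣ) :
    ∑ χ : MulChar S R, χ c * jacobiSum (A * χ) χ⁻¹ = Nat.card Sˣ * A⁻¹ (1 + c) := by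
  classical
  calc ∑ χ : MulChar S R, χ c * jacobiSum (A * χ) χ⁻¹
    _ = ∑ t : S, A t * ∑ χ : MulChar S R, χ (c * t * (1 - t)⁻¹ʳ) :=
      sum_mulChar_apply_mul_jacobiSum_eq_sum_mul_sum A c
    _ = ∑ t : S, Nat.card Sˣ * (if (1 + c) * t = 1 then A t else 0) := by
      simp only [sum_mulChar_apply_eq_ite, unit_mul_mul_inverse_one_sub_eq_one_iff, mul_ite,
        mul_zero, ite_mul, zero_mul, mul_comm (A _)]
    _ = Nat.card Sˣ * A⁻¹ (1 + c) := by
      rw [← Finset.mul_sum, sum_ite_mul_eq_one_apply_eq_inv_apply]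

theorem statement8_general [Nontrivial S] (A : MulChar S R) :
    ∑ χ : MulChar S R, χ (-1) * jacobiSum (A * χ) χ⁻¹ = 0 := by
  simpa [MulChar.map_zero] using sum_mulChar_apply_unit_mul_jacobiSum A (-1)

end JacobiSum

/-- The vanishing identity `∑_χ χ(−1)·J(φχ, χ̄) = 0`, where the sum runs over all
multiplicative characters `χ` of a finite field of odd characteristic and `φ` is the
quadratic character. -/
theorem statement8 {F : Type*} [Field F] [Fintype F] [DecidableEq F]
    [Fintype (MulChar F ℂ)] (hodd : ringChar F ≠ 2) :
    ∑ χ : MulChar F ℂ, χ (-1) * jacobiSum (quadChar F * χ) χ⁻¹ = 0 := by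
  exact statement8_general (quadChar F)
end
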